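/- Let β>0 and V satisfy conditions C1–C3 with equilibrium density ρ, fix ε>0 small, and let I = [−2−ε, 2+ε]. Let p_1^{(n)} be the first marginal density of the β-ensemble with potential V restricted to I, and define g_n(z) = ∫_I p_1^{(n)}(λ)/(z−λ) dλ and g(z) = ∫_{-2}^{2} ρ(λ)/(z−λ) dλ. Then there exists C>0 such that for all n ≥ 2 and all z ∈ ℂ with Im z ≠ 0: | g_n(z) − g(z) | ≤ C · n^{-1/2} · (log n)^{1/2} / |Im z|. -/

import Mathlib

/-!
The estimate is a concentration bound for the linear statistic
`L(z) = ∑ᵢ 1/(z - λᵢ) - n ∫ 1/(z - x) dμ(x)` (`linStat`), where `μ = ρ(x) dx`. The weight is symmetric,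
so the error in the Stieltjes transform is exactly `E[L(z)] / n` (`integral_resP1_sub`), and it suffices
to show `E|L(z)| ≤ C √(n log n) / |Im z|`.

*Energy controls the Stieltjes transform.* For a neutral charge distribution `ν` on the line,
`∬ log|x - y + iδ| dν dν` is minus an integral over scales `t ≥ δ` of Poisson forms
`∬ t/((x-y)² + t²) dν dν = ∫_{k>0} |∫ e^{-ikx} dν(x)|² e^{-tk} dk ≥ 0`.
Using only the scales close to `Im z` and Cauchy–Schwarz on the Fourier side, `(Im z)² |∫ dν(x)/(z-x)|² / 4` is at most minus the regularised
energy, for `Im z ≥ δ` (`stieltjes_sq_le_energy`). This is applied to `ν = ∑ δ_{λᵢ} - nμ`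
(`BoundedOnCut.linStat_sq_le`).

*Upper bound on the weight.* Since `2 ∫ log|x - y| dμ(y) - V(x) ≤ c`, replacing `log|u|` by its
regularisation at scale `δ = n⁻²` bounds the weight pointwise by its equilibrium value times
`exp(O(n log n) - β (Im z)² |L(z)|² / 8)` (`betaWeight_le`).

*Lower bound on the partition function.* Jensen's inequality for independent samples of `μ`, whose
density is bounded, shows that the partition function is at least the equilibrium value times
`exp(-O(n))` (`BoundedOnCut.resZ_ge`).

*Conclusion.* The two bounds give `E[(Im z)² |L(z)|²] = O(n log n)` for `Im z ≥ n⁻²`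
(`BoundedOnCut.exists_second_moment_le`), hence the first moment bound by the inequality
`A ≤ τ + A²/τ`. For smaller heights, `L(z)` is compared with `L(z + i n⁻²)`: the difference of the
two Stieltjes kernels is dominated by a multiple of the Poisson kernel at `z + i n⁻²`, which is minus
the imaginary part of the Stieltjes kernel there (`BoundedOnCut.linStat_le`). The lower half plane follows
by conjugation.
-/

open MeasureTheory

/-- Unnormalized joint eigenvalue density of the β-ensemble with potential `V`. -/
noncomputable def betaWeight (β : ℝ) (V : ℝ → ℝ) (n : ℕ) (Λ : Fin n → ℝ) : ℝ :=
  (∏ i, Real.exp (-((n : ℝ) * β * V (Λ i)) / 2)) *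
    ∏ i, ∏ j ∈ Finset.Ioi i, |Λ i - Λ j| ^ β

/-- Conditions C1–C3. -/
structure EquilC13 (V : ℝ → ℝ) (D : Set ℂ) (ρ : ℝ → ℝ) (P : ℂ → ℂ) : Prop where
  D_open : IsOpen D
  D_supset : ∀ x : ℝ, x ∈ Set.Icc (-2:ℝ) 2 → (x : ℂ) ∈ D
  ρ_nonneg : ∀ x, 0 ≤ ρ x
  ρ_int : ∫ x, ρ x = 1
  ρ_supp : ∀ x, x ∉ Set.Icc (-2:ℝ) 2 → ρ x = 0
  P_anal : DifferentiableOn ℂ P D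
  P_pos : ∃ c > 0, ∀ x : ℝ, x ∈ Set.Icc (-2:ℝ) 2 → (P x).im = 0 ∧ c ≤ (P x).re
  ρ_eq : ∀ x ∈ Set.Icc (-2:ℝ) 2,
    ρ x = (1 / (2 * Real.pi)) * (P x).re * Real.sqrt (4 - x ^ 2)
  V_anal : ∃ Vc : ℂ → ℂ, DifferentiableOn ℂ Vc D ∧ ∀ x : ℝ, (x : ℂ) ∈ D → Vc x = V x
  equil : ∃ c : ℝ, (∀ x ∈ Set.Icc (-2:ℝ) 2,
      2 * (∫ μ, Real.log |x - μ| * ρ μ) - V x = c) ∧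
    ∀ x, x ∉ Set.Icc (-2:ℝ) 2 → 2 * (∫ μ, Real.log |x - μ| * ρ μ) - V x < c

/-- Partition function of the β-ensemble restricted to the interval `[a,b]`. -/
noncomputable def resZ (β : ℝ) (V : ℝ → ℝ) (a b : ℝ) (n : ℕ) : ℝ :=
  ∫ Λ in Set.univ.pi (fun _ : Fin n => Set.Icc a b), betaWeight β V n Λ

/-- First marginal density of the β-ensemble (`n = k+2` eigenvalues) restricted to `[a,b]`. -/
noncomputable def resP1 (β : ℝ) (V : ℝ → ℝ) (a b : ℝ) (k : ℕ) (l : ℝ) : ℝ :=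
  (resZ β V a b (k + 2))⁻¹ *
    ∫ y in Set.univ.pi (fun _ : Fin (k + 1) => Set.Icc a b),
      betaWeight β V (k + 2) (Fin.cons l y)

/-! ### The logarithmic energy of a neutral charge distribution -/

/-- The regularised logarithmic kernel `log |u + i t|`. -/
noncomputable def regLog (t u : ℝ) : ℝ := (1 / 2) * Real.log (u ^ 2 + t ^ 2)

lemma integral_laplace_phase {t : ℝ} (ht : 0 < t) (u : ℝ) :
    ∫ k in Set.Ioi (0 : ℝ), Complex.exp (-(t + u * Complex.I) * k) = 1 / (t + u * Complex.I) := by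
  rw [integral_exp_mul_complex_Ioi (by simpa using ht)]
  simp only [Complex.ofReal_zero, mul_zero, Complex.exp_zero]
  rw [neg_div_neg_eq]

lemma re_inv_phase {t : ℝ} (u : ℝ) :
    (1 / ((t : ℂ) + u * Complex.I)).re = t / (u ^ 2 + t ^ 2) := by
  simp [Complex.normSq_apply]
  ring_nf

section Kernel

variable {X : Type*} [MeasurableSpace X]

/-- The Fourier transform of the signed measure `s · m` transported by `p`. -/
noncomputable def chargeFourier (m : Measure X) (s p : X → ℝ) (k : ℝ) : ℂ :=
  ∫ x, (s x : ℂ) * Complex.exp (-(p x * Complex.I) * k) ∂m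

variable {m : Measure X} [IsFiniteMeasure m] {s p : X → ℝ}

lemma norm_phase (a k : ℝ) : ‖Complex.exp (-(a * Complex.I) * k)‖ = 1 := by
  rw [Complex.norm_exp]; simp

lemma aestronglyMeasurable_chargeFourier (hs : Measurable s) (hp : Measurable p) (ν : Measure ℝ) :
    AEStronglyMeasurable (chargeFourier m s p) ν := by
  unfold chargeFourier
  apply StronglyMeasurable.aestronglyMeasurable
  apply StronglyMeasurable.integral_prod_right (f := fun (k : ℝ) (x : X) =>
    (s x : ℂ) * Complex.exp (-(p x * Complex.I) * k))
  apply Measurable.stronglyMeasurable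
  simp only [Function.uncurry_def]
  fun_prop

lemma norm_chargeFourier_le (h1 : ∀ x, |s x| ≤ 1) (k : ℝ) :
    ‖chargeFourier m s p k‖ ≤ m.real Set.univ := by
  unfold chargeFourier
  refine (norm_integral_le_of_norm_le_const (C := 1) ?_).trans (by simp)
  filter_upwards with x
  rw [norm_mul, norm_phase]
  simpa using h1 x

lemma integrable_exp_neg_mul {a : ℝ} (ha : 0 < a) :
    IntegrableOn (fun k : ℝ => Real.exp (-a * k)) (Set.Ioi 0) :=
  integrableOn_exp_mul_Ioi (by linarith) 0

lemma integral_exp_neg_mul {a : ℝ} (ha : 0 < a) :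
    ∫ k in Set.Ioi (0 : ℝ), Real.exp (-a * k) = 1 / a := by
  rw [integral_exp_mul_Ioi (by linarith)]
  simp

/-- The Poisson kernel form of a charge distribution is the Laplace transform of the squared
modulus of its Fourier transform; in particular it is positive. -/
lemma poisson_form_eq (hs : Measurable s) (hp : Measurable p) (h1 : ∀ x, |s x| ≤ 1)
    {t : ℝ} (ht : 0 < t) :
    ∫ w, s w.1 * s w.2 * (t / ((p w.1 - p w.2) ^ 2 + t ^ 2)) ∂(m.prod m)
      = ∫ k in Set.Ioi (0 : ℝ), Real.exp (-t * k) * ‖chargeFourier m s p k‖ ^ 2 := by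
  set F : ℝ → X × X → ℂ := fun k w => ((s w.1 * s w.2 : ℝ) : ℂ) *
    Complex.exp (-(t + ((p w.1 - p w.2 : ℝ) : ℂ) * Complex.I) * k) with hF
  have hFn : ∀ k w, ‖F k w‖ ≤ Real.exp (-t * k) := by
    intro k w
    have e : ‖Complex.exp (-(t + ((p w.1 - p w.2 : ℝ) : ℂ) * Complex.I) * k)‖
        = Real.exp (-t * k) := by
      rw [Complex.norm_exp]; simp
    simp only [hF, norm_mul, e, Complex.norm_real, Real.norm_eq_abs]
    have : |s w.1| * |s w.2| ≤ 1 := mul_le_one₀ (h1 _) (abs_nonneg _) (h1 _)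
    nlinarith [Real.exp_pos (-t * k)]
  have hFint : Integrable (Function.uncurry F)
      ((volume.restrict (Set.Ioi (0 : ℝ))).prod (m.prod m)) := by
    have hg : Integrable (fun z : ℝ × (X × X) => Real.exp (-t * z.1) * 1)
        ((volume.restrict (Set.Ioi (0 : ℝ))).prod (m.prod m)) :=
      Integrable.mul_prod (f := fun k : ℝ => Real.exp (-t * k)) (g := fun _ : X × X => (1 : ℝ))
        (integrable_exp_neg_mul ht) (integrable_const _)
    refine hg.mono' ?_ ?_
    · apply Measurable.aestronglyMeasurable
      simp only [hF, Function.uncurry_def]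
      fun_prop
    · filter_upwards with z
      rw [mul_one]
      exact hFn z.1 z.2
  have hsw := integral_integral_swap hFint
  have hL : ∀ k : ℝ, ∫ w, F k w ∂(m.prod m)
      = ((Real.exp (-t * k) * ‖chargeFourier m s p k‖ ^ 2 : ℝ) : ℂ) := by
    intro k
    have e1 : ∀ w : X × X, F k w = Complex.exp (-t * k) *
        (((s w.1 : ℂ) * Complex.exp (-(p w.1 * Complex.I) * k)) *
        (starRingEnd ℂ) ((s w.2 : ℂ) * Complex.exp (-(p w.2 * Complex.I) * k))) := by
      intro w
      simp only [hF, map_mul, Complex.conj_ofReal, ← Complex.exp_conj, map_neg, Complex.conj_I]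
      have : Complex.exp (-(t + ((p w.1 - p w.2 : ℝ) : ℂ) * Complex.I) * k)
        = Complex.exp (-t * k) * Complex.exp (-(p w.1 * Complex.I) * k) *
          Complex.exp (-(p w.2 * -Complex.I) * k) := by
        rw [← Complex.exp_add, ← Complex.exp_add]
        congr 1; push_cast; ring
      rw [this]; push_cast; ring
    simp_rw [e1]
    rw [integral_const_mul, integral_prod_mul
      (f := fun x => (s x : ℂ) * Complex.exp (-(p x * Complex.I) * k))
      (g := fun x => (starRingEnd ℂ) ((s x : ℂ) * Complex.exp (-(p x * Complex.I) * k))),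
      integral_conj]
    change _ * (chargeFourier m s p k * (starRingEnd ℂ) (chargeFourier m s p k)) = _
    rw [Complex.mul_conj, Complex.normSq_eq_norm_sq]
    push_cast; rfl
  have hR : ∀ w : X × X, ∫ k in Set.Ioi (0 : ℝ), F k w
      = ((s w.1 * s w.2 : ℝ) : ℂ) * (1 / (t + ((p w.1 - p w.2 : ℝ) : ℂ) * Complex.I)) := by
    intro w
    simp only [hF]
    rw [integral_const_mul, integral_laplace_phase ht]
  simp_rw [hL, hR] at hsw
  have hint2 := hFint.integral_prod_right
  have e2 : ∀ w : X × X, ∫ k in Set.Ioi (0 : ℝ), Function.uncurry F (k, w)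
    = ((s w.1 * s w.2 : ℝ) : ℂ) * (1 / (t + ((p w.1 - p w.2 : ℝ) : ℂ) * Complex.I)) :=
    fun w => hR w
  simp_rw [e2] at hint2
  rw [integral_complex_ofReal] at hsw
  have := congrArg Complex.re hsw
  rw [Complex.ofReal_re] at this
  rw [this]
  have h3 := integral_re hint2
  simp only [RCLike.re_eq_complex_re] at h3
  rw [← h3]
  congr 1; ext w
  rw [Complex.re_ofReal_mul, re_inv_phase]

lemma integrable_poisson_fourier (hs : Measurable s) (hp : Measurable p) (h1 : ∀ x, |s x| ≤ 1)
    {t : ℝ} (ht : 0 < t) (j : ℕ) :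
    IntegrableOn (fun k : ℝ => Real.exp (-t * k) * ‖chargeFourier m s p k‖ ^ j) (Set.Ioi 0) := by
  have := (integrable_exp_neg_mul ht).bdd_mul (c := (m.real Set.univ) ^ j)
    (f := fun k : ℝ => ‖chargeFourier m s p k‖ ^ j)
    ((aestronglyMeasurable_chargeFourier hs hp _).norm.pow j) (by
      filter_upwards with k
      rw [norm_pow, norm_norm]
      exact pow_le_pow_left₀ (norm_nonneg _) (norm_chargeFourier_le h1 k) j)
  refine this.congr (Filter.Eventually.of_forall fun k => ?_)
  exact mul_comm _ _

/-- The Stieltjes transform is dominated by a Laplace transform of the Fourier modulus. -/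
lemma norm_stieltjes_le (hs : Measurable s) (hp : Measurable p) (h1 : ∀ x, |s x| ≤ 1)
    {z : ℂ} (hz : 0 < z.im) :
    ‖∫ x, (s x : ℂ) / (z - p x) ∂m‖
      ≤ ∫ k in Set.Ioi (0 : ℝ), Real.exp (-z.im * k) * ‖chargeFourier m s p k‖ := by
  set F : ℝ → X → ℂ := fun k x => Complex.exp (Complex.I * z * k) *
    ((s x : ℂ) * Complex.exp (-(p x * Complex.I) * k)) with hF
  have hE : ∀ k : ℝ, ‖Complex.exp (Complex.I * z * k)‖ = Real.exp (-z.im * k) := by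
    intro k; rw [Complex.norm_exp]; simp
  have hFint : Integrable (Function.uncurry F)
      ((volume.restrict (Set.Ioi (0 : ℝ))).prod m) := by
    have hg : Integrable (fun z' : ℝ × X => Real.exp (-z.im * z'.1) * 1)
        ((volume.restrict (Set.Ioi (0 : ℝ))).prod m) :=
      Integrable.mul_prod (f := fun k : ℝ => Real.exp (-z.im * k)) (g := fun _ : X => (1 : ℝ))
        (integrable_exp_neg_mul hz) (integrable_const _)
    refine hg.mono' ?_ ?_
    · apply Measurable.aestronglyMeasurable
      simp only [hF, Function.uncurry_def]
      fun_prop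
    · filter_upwards with w
      simp only [hF, Function.uncurry_def, norm_mul, hE, norm_phase, Complex.norm_real,
        Real.norm_eq_abs, mul_one]
      nlinarith [Real.exp_pos (-z.im * w.1), h1 w.2]
  have hsw := integral_integral_swap hFint
  have hL : ∀ k : ℝ, ∫ x, F k x ∂m = Complex.exp (Complex.I * z * k) * chargeFourier m s p k := by
    intro k
    simp only [hF]
    rw [integral_const_mul]; rfl
  have hR : ∀ x : X, ∫ k in Set.Ioi (0 : ℝ), F k x = Complex.I * ((s x : ℂ) / (z - p x)) := by
    intro x
    have e : ∀ k : ℝ, F k x = (s x : ℂ) * Complex.exp ((Complex.I * (z - p x)) * k) := by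
      intro k
      simp only [hF]
      have : Complex.exp ((Complex.I * (z - p x)) * k) =
        Complex.exp (Complex.I * z * k) * Complex.exp (-(p x * Complex.I) * k) := by
        rw [← Complex.exp_add]; congr 1; ring
      rw [this]; ring
    have hne : z - p x ≠ 0 := by
      intro h
      have := congrArg Complex.im h
      simp at this
      linarith
    simp_rw [e]
    rw [integral_const_mul, integral_exp_mul_complex_Ioi (by simpa using hz)]
    simp only [Complex.ofReal_zero, mul_zero, Complex.exp_zero]
    field_simp
    simp
  simp_rw [hL, hR] at hsw
  rw [integral_const_mul] at hsw
  have h4 := congrArg norm hsw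
  rw [norm_mul, Complex.norm_I, one_mul] at h4
  rw [← h4]
  refine (norm_integral_le_integral_norm _).trans (le_of_eq ?_)
  congr 1; ext k
  rw [norm_mul, hE]

/-- Cauchy–Schwarz between the Poisson form at scale `t` and the Stieltjes transform. -/
lemma stieltjes_sq_le_poisson (hs : Measurable s) (hp : Measurable p) (h1 : ∀ x, |s x| ≤ 1)
    {z : ℂ} (hz : 0 < z.im) {t : ℝ} (ht : 0 < t) (htz : t < 2 * z.im) :
    (2 * z.im - t) * ‖∫ x, (s x : ℂ) / (z - p x) ∂m‖ ^ 2
      ≤ ∫ w, s w.1 * s w.2 * (t / ((p w.1 - p w.2) ^ 2 + t ^ 2)) ∂(m.prod m) := by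
  rw [poisson_form_eq hs hp h1 ht]
  set A := ∫ k in Set.Ioi (0 : ℝ), Real.exp (-z.im * k) * ‖chargeFourier m s p k‖ with hA
  have hle := norm_stieltjes_le (m := m) hs hp h1 hz
  set b := 2 * z.im - t with hb
  have hb0 : 0 < b := by linarith
  -- expand the square `(e^{-tk/2} |S| - A b e^{-bk/2})² ≥ 0`, `S` the Fourier transform of the charge
  have hI2 := integrable_poisson_fourier (m := m) hs hp h1 ht 2
  have hI1 := integrable_poisson_fourier (m := m) hs hp h1 hz 1
  have hI0 := integrable_exp_neg_mul hb0
  simp only [pow_one] at hI1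
  have hpos : 0 ≤ ∫ k in Set.Ioi (0 : ℝ),
      ((Real.exp (-t * k) * ‖chargeFourier m s p k‖ ^ 2
        - (2 * (A * b)) * (Real.exp (-z.im * k) * ‖chargeFourier m s p k‖))
        + (A * b) ^ 2 * Real.exp (-b * k)) := by
    apply integral_nonneg
    intro k
    have e1 : Real.exp (-t * k) = Real.exp (-t * k / 2) ^ 2 := by
      rw [← Real.exp_nat_mul]; congr 1; push_cast; ring
    have e2 : Real.exp (-b * k) = Real.exp (-b * k / 2) ^ 2 := by
      rw [← Real.exp_nat_mul]; congr 1; push_cast; ring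
    have e3 : Real.exp (-z.im * k) = Real.exp (-t * k / 2) * Real.exp (-b * k / 2) := by
      rw [← Real.exp_add]; congr 1; rw [hb]; ring
    simp only [Pi.zero_apply]
    rw [e1, e2, e3]
    nlinarith [sq_nonneg (Real.exp (-t * k / 2) * ‖chargeFourier m s p k‖
      - A * b * Real.exp (-b * k / 2))]
  have hI21 : Integrable (fun k : ℝ => Real.exp (-t * k) * ‖chargeFourier m s p k‖ ^ 2
      - (2 * (A * b)) * (Real.exp (-z.im * k) * ‖chargeFourier m s p k‖))
      (volume.restrict (Set.Ioi 0)) := hI2.sub (hI1.const_mul _)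
  rw [integral_add hI21 (hI0.const_mul _),
    integral_sub hI2 (hI1.const_mul _), integral_const_mul, integral_const_mul,
    integral_exp_neg_mul hb0, ← hA] at hpos
  have e4 : (A * b) ^ 2 * (1 / b) = b * A ^ 2 := by field_simp
  rw [e4] at hpos
  have h5 : ‖∫ x, (s x : ℂ) / (z - p x) ∂m‖ ^ 2 ≤ A ^ 2 :=
    pow_le_pow_left₀ (norm_nonneg _) hle 2
  nlinarith

lemma poisson_form_nonneg (hs : Measurable s) (hp : Measurable p) (h1 : ∀ x, |s x| ≤ 1)
    {t : ℝ} (ht : 0 < t) :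
    0 ≤ ∫ w, s w.1 * s w.2 * (t / ((p w.1 - p w.2) ^ 2 + t ^ 2)) ∂(m.prod m) := by
  rw [poisson_form_eq hs hp h1 ht]
  exact integral_nonneg fun k => by positivity

lemma continuous_regLog {t : ℝ} (ht : 0 < t) : Continuous (regLog t) := by
  unfold regLog
  refine continuous_const.mul (Continuous.log (by fun_prop) fun u => ?_)
  positivity

lemma integral_poisson_eq_regLog {δ T : ℝ} (hδ : 0 < δ) (hT : δ ≤ T) (u : ℝ) :
    ∫ t in δ..T, t / (u ^ 2 + t ^ 2) = regLog T u - regLog δ u := by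
  have hpos : ∀ t ∈ Set.uIcc δ T, 0 < t := by
    intro t ht
    rw [Set.uIcc_of_le hT] at ht
    exact hδ.trans_le ht.1
  apply intervalIntegral.integral_eq_sub_of_hasDerivAt (f := fun t => regLog t u)
  · intro t ht
    have h0 := hpos t ht
    unfold regLog
    have h := (((hasDerivAt_pow 2 t).const_add (u ^ 2)).log (by positivity)).const_mul (1 / 2 : ℝ)
    refine h.congr_deriv ?_
    push_cast
    ring
  · apply ContinuousOn.intervalIntegrable
    apply ContinuousOn.div (by fun_prop) (by fun_prop)
    intro t ht
    have := hpos t ht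
    positivity

/-- The logarithmic energy at scale `δ`, relative to scale `T`, dominates the Stieltjes transform at
height `z.im ≥ δ`. The contribution of the scales in `[z.im, 3 z.im / 2]` suffices. -/
lemma stieltjes_sq_le_regLog_sub (hs : Measurable s) (hp : Measurable p) (h1 : ∀ x, |s x| ≤ 1)
    {z : ℂ} {δ T : ℝ} (hδ : 0 < δ) (hz : δ ≤ z.im) (hT : 3 / 2 * z.im ≤ T) :
    z.im ^ 2 / 4 * ‖∫ x, (s x : ℂ) / (z - p x) ∂m‖ ^ 2
      ≤ ∫ w, s w.1 * s w.2 * (regLog T (p w.1 - p w.2) - regLog δ (p w.1 - p w.2))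
          ∂(m.prod m) := by
  have hz0 : 0 < z.im := hδ.trans_le hz
  have hδT : δ ≤ T := by linarith
  set A := ‖∫ x, (s x : ℂ) / (z - p x) ∂m‖ with hA
  set F : ℝ → X × X → ℝ := fun t w => s w.1 * s w.2 * (t / ((p w.1 - p w.2) ^ 2 + t ^ 2)) with hF
  have hFint : Integrable (Function.uncurry F)
      ((volume.restrict (Set.Ioc δ T)).prod (m.prod m)) := by
    apply Integrable.of_bound (C := 1 / δ)
    · apply Measurable.aestronglyMeasurable
      simp only [hF, Function.uncurry_def]
      fun_prop
    · have : ∀ᵐ t ∂(volume.restrict (Set.Ioc δ T)), t ∈ Set.Ioc δ T :=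
        ae_restrict_mem measurableSet_Ioc
      filter_upwards [Measure.quasiMeasurePreserving_fst.ae this] with w hw
      have hw0 : 0 < w.1 := hδ.trans hw.1
      simp only [hF, Function.uncurry_def, Real.norm_eq_abs, abs_mul]
      have h2 : |s w.2.1| * |s w.2.2| ≤ 1 := mul_le_one₀ (h1 _) (abs_nonneg _) (h1 _)
      have h3 : |w.1 / ((p w.2.1 - p w.2.2) ^ 2 + w.1 ^ 2)| ≤ 1 / δ := by
        rw [abs_of_nonneg (by positivity), div_le_div_iff₀ (by positivity) hδ]
        nlinarith [sq_nonneg (p w.2.1 - p w.2.2), hw.1]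
      calc _ ≤ 1 * (1 / δ) := mul_le_mul h2 h3 (abs_nonneg _) zero_le_one
        _ = _ := one_mul _
  have hsw := integral_integral_swap hFint
  have hR : ∀ w : X × X, ∫ t in Set.Ioc δ T, F t w
      = s w.1 * s w.2 * (regLog T (p w.1 - p w.2) - regLog δ (p w.1 - p w.2)) := by
    intro w
    simp only [hF]
    rw [integral_const_mul, ← intervalIntegral.integral_of_le hδT,
      integral_poisson_eq_regLog hδ hδT]
  simp_rw [hR] at hsw
  rw [← hsw]
  have hint := hFint.integral_prod_left
  have hsub : Set.Ioc z.im (3 / 2 * z.im) ⊆ Set.Ioc δ T := Set.Ioc_subset_Ioc hz hT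
  calc z.im ^ 2 / 4 * A ^ 2
      = ∫ t in Set.Ioc z.im (3 / 2 * z.im), (z.im / 2 * A ^ 2 : ℝ) := by
        simp only [integral_const, measureReal_restrict_apply_univ, Real.volume_real_Ioc,
          smul_eq_mul]
        rw [max_eq_left (by linarith)]; ring
    _ ≤ ∫ t in Set.Ioc z.im (3 / 2 * z.im), ∫ w, F t w ∂(m.prod m) := by
        apply setIntegral_mono_on (integrable_const _) (hint.mono_measure
          (Measure.restrict_mono hsub le_rfl)) measurableSet_Ioc
        intro t ht
        refine le_trans ?_ (stieltjes_sq_le_poisson hs hp h1 hz0 (hz0.trans ht.1)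
          (by linarith [ht.2]))
        apply mul_le_mul_of_nonneg_right _ (by positivity)
        linarith [ht.2]
    _ ≤ ∫ t in Set.Ioc δ T, ∫ w, F t w ∂(m.prod m) := by
        apply setIntegral_mono_set hint _ hsub.eventuallyLE
        filter_upwards [ae_restrict_mem measurableSet_Ioc] with t ht
        exact poisson_form_nonneg hs hp h1 (hδ.trans ht.1)

lemma abs_regLog_sub_log_le {T R u : ℝ} (hT : 0 < T) (hu : |u| ≤ R) :
    |regLog T u - Real.log T| ≤ R ^ 2 / T ^ 2 := by
  have e : regLog T u - Real.log T = 1 / 2 * Real.log (1 + u ^ 2 / T ^ 2) := by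
    have : u ^ 2 + T ^ 2 = T ^ 2 * (1 + u ^ 2 / T ^ 2) := by field_simp; ring
    unfold regLog
    rw [this, Real.log_mul (by positivity) (by positivity), Real.log_pow]
    push_cast; ring
  rw [e, abs_of_nonneg (by
    have : 0 ≤ Real.log (1 + u ^ 2 / T ^ 2) := Real.log_nonneg (by
      have : 0 ≤ u ^ 2 / T ^ 2 := by positivity
      linarith)
    positivity)]
  have h1 := Real.log_le_sub_one_of_pos (x := 1 + u ^ 2 / T ^ 2) (by positivity)
  have h2 : u ^ 2 / T ^ 2 ≤ R ^ 2 / T ^ 2 := by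
    apply div_le_div_of_nonneg_right _ (by positivity)
    exact sq_le_sq' (by linarith [abs_le.1 hu]) (abs_le.1 hu).2
  have : 0 ≤ u ^ 2 / T ^ 2 := by positivity
  linarith

/-- For a neutral, compactly supported charge distribution the Stieltjes transform at height
`z.im ≥ δ` is controlled by the regularised logarithmic energy. -/
lemma stieltjes_sq_le_energy (hs : Measurable s) (hp : Measurable p) (h1 : ∀ x, |s x| ≤ 1)
    {R : ℝ} (hR : ∀ᵐ x ∂m, |p x| ≤ R) (h0 : ∫ x, s x ∂m = 0)
    {z : ℂ} {δ : ℝ} (hδ : 0 < δ) (hz : δ ≤ z.im) :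
    z.im ^ 2 / 4 * ‖∫ x, (s x : ℂ) / (z - p x) ∂m‖ ^ 2
      ≤ - ∫ w, s w.1 * s w.2 * regLog δ (p w.1 - p w.2) ∂(m.prod m) := by
  have hdiff : ∀ᵐ w ∂(m.prod m), |p w.1 - p w.2| ≤ 2 * R := by
    filter_upwards [Measure.quasiMeasurePreserving_fst.ae hR,
      Measure.quasiMeasurePreserving_snd.ae hR] with w h2 h3
    rw [abs_le] at *
    constructor <;> linarith [h2.1, h2.2, h3.1, h3.2]
  have hss : ∀ w : X × X, |s w.1 * s w.2| ≤ 1 := fun w => by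
    rw [abs_mul]; exact mul_le_one₀ (h1 _) (abs_nonneg _) (h1 _)
  have hmeas : ∀ {T : ℝ}, 0 < T → Measurable (fun w : X × X => regLog T (p w.1 - p w.2)) :=
    fun hT => (continuous_regLog hT).measurable.comp (by fun_prop)
  have hbd : ∀ {T : ℝ}, 0 < T → ∀ᵐ w ∂(m.prod m),
      ‖s w.1 * s w.2 * (regLog T (p w.1 - p w.2) - Real.log T)‖ ≤ (2 * R) ^ 2 / T ^ 2 := by
    intro T hT
    filter_upwards [hdiff] with w hw
    rw [Real.norm_eq_abs, abs_mul]
    calc _ ≤ 1 * ((2 * R) ^ 2 / T ^ 2) :=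
          mul_le_mul (hss w) (abs_regLog_sub_log_le hT hw) (abs_nonneg _) zero_le_one
      _ = _ := one_mul _
  have hint : ∀ {T : ℝ}, 0 < T → Integrable
      (fun w : X × X => s w.1 * s w.2 * (regLog T (p w.1 - p w.2) - Real.log T)) (m.prod m) := by
    intro T hT
    refine Integrable.of_bound ?_ _ (hbd hT)
    exact (Measurable.mul (by fun_prop) ((hmeas hT).sub_const _)).aestronglyMeasurable
  have hintc : ∀ c : ℝ, Integrable (fun w : X × X => s w.1 * s w.2 * c) (m.prod m) := by
    intro c
    refine Integrable.of_bound (Measurable.aestronglyMeasurable (by fun_prop)) |c| ?_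
    filter_upwards with w
    rw [Real.norm_eq_abs, abs_mul]
    nlinarith [hss w, abs_nonneg c]
  have hneutral : ∀ c : ℝ, ∫ w, s w.1 * s w.2 * c ∂(m.prod m) = 0 := by
    intro c
    rw [integral_mul_const, integral_prod_mul, h0]; simp
  have key : ∀ T : ℝ, 3 / 2 * z.im ≤ T → z.im ^ 2 / 4 * ‖∫ x, (s x : ℂ) / (z - p x) ∂m‖ ^ 2
      ≤ (2 * R) ^ 2 / T ^ 2 * (m.prod m).real Set.univ
        - ∫ w, s w.1 * s w.2 * regLog δ (p w.1 - p w.2) ∂(m.prod m) := by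
    intro T hT
    have hT0 : 0 < T := by linarith
    refine (stieltjes_sq_le_regLog_sub hs hp h1 hδ hz hT).trans ?_
    have e : ∀ {T' : ℝ}, 0 < T' →
        ∫ w, s w.1 * s w.2 * regLog T' (p w.1 - p w.2) ∂(m.prod m)
        = ∫ w, s w.1 * s w.2 * (regLog T' (p w.1 - p w.2) - Real.log T') ∂(m.prod m) := by
      intro T' hT'
      rw [← add_zero (∫ w, s w.1 * s w.2 * (regLog T' (p w.1 - p w.2) - Real.log T') ∂(m.prod m)),
        ← hneutral (Real.log T'), ← integral_add (hint hT') (hintc _)]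
      congr 1; ext w; ring
    have e2 : ∫ w, s w.1 * s w.2 * (regLog T (p w.1 - p w.2) - regLog δ (p w.1 - p w.2))
          ∂(m.prod m) =
        ∫ w, s w.1 * s w.2 * (regLog T (p w.1 - p w.2) - Real.log T) ∂(m.prod m)
        - ∫ w, s w.1 * s w.2 * (regLog δ (p w.1 - p w.2) - Real.log δ) ∂(m.prod m) := by
      rw [← integral_sub (hint hT0) (hint hδ), ← sub_zero (∫ w, _ ∂_),
        ← hneutral (Real.log T - Real.log δ), ← integral_sub _ (hintc _)]
      · congr 1; ext w; ring
      · refine (((hint hT0).sub (hint hδ)).add (hintc (Real.log T - Real.log δ))).congr ?_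
        filter_upwards with w
        simp only [Pi.add_apply, Pi.sub_apply]; ring
    rw [e2, e hδ]
    gcongr
    exact (le_abs_self _).trans (norm_integral_le_of_norm_le_const (hbd hT0))
  have hlim : Filter.Tendsto (fun T : ℝ => (2 * R) ^ 2 / T ^ 2 * (m.prod m).real Set.univ
        - ∫ w, s w.1 * s w.2 * regLog δ (p w.1 - p w.2) ∂(m.prod m)) Filter.atTop
      (nhds (0 * (m.prod m).real Set.univ
        - ∫ w, s w.1 * s w.2 * regLog δ (p w.1 - p w.2) ∂(m.prod m))) := by
    refine Filter.Tendsto.sub_const (Filter.Tendsto.mul_const _ ?_) _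
    exact Filter.Tendsto.div_atTop tendsto_const_nhds (Filter.tendsto_pow_atTop (by norm_num))
  rw [zero_mul, zero_sub] at hlim
  exact ge_of_tendsto hlim (Filter.eventually_atTop.2 ⟨_, fun T hT => key T hT⟩)

end Kernel

/-! ### Potentials of a measure with bounded density on `[-2, 2]` -/

/-- `μ` is supported on `[-2,2]` and has a density bounded by `M`. -/
structure BoundedOnCut (μ : Measure ℝ) (M : ℝ) : Prop where
  pos : 0 < M
  le : μ ≤ ENNReal.ofReal M • volume.restrict (Set.Icc (-2 : ℝ) 2)

section Reference

variable {μ : Measure ℝ} {M : ℝ}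

lemma BoundedOnCut.le_volume (h : BoundedOnCut μ M) : μ ≤ ENNReal.ofReal M • volume :=
  h.le.trans (by gcongr; exact Measure.restrict_le_self)

lemma BoundedOnCut.ae_mem (h : BoundedOnCut μ M) : ∀ᵐ x ∂μ, x ∈ Set.Icc (-2 : ℝ) 2 := by
  have h1 : ∀ᵐ x ∂(ENNReal.ofReal M • volume.restrict (Set.Icc (-2 : ℝ) 2)),
      x ∈ Set.Icc (-2 : ℝ) 2 :=
    Measure.ae_smul_measure (ae_restrict_mem measurableSet_Icc) _
  exact (Measure.absolutelyContinuous_of_le h.le).ae_le h1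

lemma BoundedOnCut.absolutelyContinuous (h : BoundedOnCut μ M) : μ ≪ volume := by
  refine (Measure.absolutelyContinuous_of_le h.le_volume).trans ?_
  exact Measure.smul_absolutelyContinuous

lemma BoundedOnCut.ae_ne (h : BoundedOnCut μ M) (a : ℝ) : ∀ᵐ x ∂μ, x ≠ a := by
  have : ∀ᵐ x ∂(volume : Measure ℝ), x ≠ a := by
    rw [ae_iff]; simp
  exact h.absolutelyContinuous.ae_le this

/-- Convolving a nonnegative locally integrable function with `μ` gives a bounded function. -/
lemma BoundedOnCut.convolution_le (hμ : BoundedOnCut μ M) {h : ℝ → ℝ} (h0 : ∀ u, 0 ≤ h u) {R : ℝ}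
    (hint : IntegrableOn h (Set.Icc (-R) R)) {x : ℝ} (hx : |x| + 2 ≤ R) :
    Integrable (fun y => h (x - y)) μ ∧
      ∫ y, h (x - y) ∂μ ≤ M * ∫ u in Set.Icc (-R) R, h u := by
  set H := (Set.Icc (-R) R).indicator h with hH
  have hHi : Integrable H := (integrable_indicator_iff measurableSet_Icc).2 hint
  have hH0 : ∀ u, 0 ≤ H u := fun u => Set.indicator_nonneg (fun u _ => h0 u) u
  have hHx : Integrable (fun y => H (x - y)) := hHi.comp_sub_left x
  have hae : ∀ᵐ y ∂μ, H (x - y) = h (x - y) := by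
    filter_upwards [hμ.ae_mem] with y hy
    apply Set.indicator_of_mem
    have := abs_le.1 (le_refl |x|)
    constructor <;> linarith [hy.1, hy.2, this.1, this.2]
  have hsm : Integrable (fun y => H (x - y)) (ENNReal.ofReal M • volume) :=
    hHx.smul_measure ENNReal.ofReal_ne_top
  constructor
  · exact (hsm.mono_measure hμ.le_volume).congr hae
  · calc ∫ y, h (x - y) ∂μ = ∫ y, H (x - y) ∂μ := (integral_congr_ae hae).symm
      _ ≤ ∫ y, H (x - y) ∂(ENNReal.ofReal M • volume) :=
        integral_mono_measure hμ.le_volume (Filter.Eventually.of_forall fun y => hH0 _) hsm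
      _ = M * ∫ u in Set.Icc (-R) R, h u := by
        rw [integral_smul_measure, ENNReal.toReal_ofReal hμ.pos.le, smul_eq_mul,
          integral_sub_left_eq_self H volume x, hH, integral_indicator measurableSet_Icc]

lemma integrableOn_abs_log (R : ℝ) :
    IntegrableOn (fun u => ‖Real.log |u|‖) (Set.Icc (-R) R) := by
  have h := (intervalIntegral.intervalIntegrable_log' (a := -R) (b := R)).1
  rw [← integrableOn_Icc_iff_integrableOn_Ioc] at h
  simp only [Real.log_abs]
  exact h.norm

lemma integrableOn_rsqrt (R : ℝ) :
    IntegrableOn (fun u : ℝ => |u| ^ (-(1 / 2) : ℝ)) (Set.Icc (-R) R) := by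
  have h : ∀ R : ℝ, IntegrableOn (fun u : ℝ => |u| ^ (-(1 / 2) : ℝ)) (Set.Ioc 0 R) := by
    intro R
    have h1 := (intervalIntegral.intervalIntegrable_rpow' (a := 0) (b := R)
      (r := -(1 / 2)) (by norm_num)).1
    refine IntegrableOn.congr_fun h1 (fun u hu => ?_) measurableSet_Ioc
    simp only [abs_of_pos hu.1]
  have h2 : IntegrableOn (fun u : ℝ => |u| ^ (-(1 / 2) : ℝ)) (Set.Ico (-R) 0) := by
    have h3 := ((h R).integrable_indicator measurableSet_Ioc).comp_neg
    rw [← integrable_indicator_iff measurableSet_Ico]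
    refine h3.congr (Filter.Eventually.of_forall fun u => ?_)
    simp only [Set.indicator_apply, Set.mem_Ioc, Set.mem_Ico, abs_neg]
    congr 1
    apply propext
    constructor <;> rintro ⟨a, b⟩ <;> constructor <;> linarith
  have h4 : IntegrableOn (fun u : ℝ => |u| ^ (-(1 / 2) : ℝ)) {0} := by
    simp
  refine (((h R).union h2).union h4).mono_set ?_
  intro u hu
  rcases lt_trichotomy u 0 with h | h | h
  · exact Or.inl (Or.inr ⟨hu.1, h⟩)
  · exact Or.inr h
  · exact Or.inl (Or.inl ⟨h, hu.2⟩)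

/-- The logarithmic potential of `μ`. -/
noncomputable def logPot (μ : Measure ℝ) (x : ℝ) : ℝ := ∫ y, Real.log |x - y| ∂μ

/-- The logarithmic potential of `μ` regularised at scale `δ`. -/
noncomputable def regPot (μ : Measure ℝ) (δ x : ℝ) : ℝ := ∫ y, regLog δ (x - y) ∂μ

lemma log_abs_le_regLog {δ u : ℝ} (hu : u ≠ 0) : Real.log |u| ≤ regLog δ u := by
  have h : Real.log |u| = 1 / 2 * Real.log (u ^ 2) := by
    rw [Real.log_pow, Real.log_abs]; push_cast; ring
  rw [h]
  unfold regLog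
  have : Real.log (u ^ 2) ≤ Real.log (u ^ 2 + δ ^ 2) :=
    Real.log_le_log (by positivity) (by nlinarith [sq_nonneg δ])
  linarith

/-- A crude bound for the regularisation error, based on `1 + a² ≤ (1 + √a)⁴`. -/
lemma regLog_sub_log_le {δ u : ℝ} (hδ : 0 < δ) (hu : u ≠ 0) :
    regLog δ u - Real.log |u| ≤ 2 * Real.sqrt δ * |u| ^ (-(1 / 2) : ℝ) := by
  have hu' : 0 < |u| := abs_pos.2 hu
  set a := Real.sqrt δ * |u| ^ (-(1 / 2) : ℝ) with ha
  have ha0 : 0 ≤ a := by positivity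
  have hr : (|u| ^ (-(1 / 2) : ℝ)) ^ 2 = |u|⁻¹ := by
    rw [← Real.rpow_natCast, ← Real.rpow_mul hu'.le]
    norm_num
    rw [Real.rpow_neg_one]
  have ha2 : a ^ 2 = δ / |u| := by
    rw [ha, mul_pow, Real.sq_sqrt hδ.le, hr]; rfl
  have e : u ^ 2 + δ ^ 2 = |u| ^ 2 * (1 + (a ^ 2) ^ 2) := by
    rw [ha2, ← sq_abs u]; field_simp
  have h1 : Real.log (u ^ 2 + δ ^ 2) = 2 * Real.log |u| + Real.log (1 + (a ^ 2) ^ 2) := by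
    rw [e, Real.log_mul (by positivity) (by positivity), Real.log_pow]; push_cast; ring
  have h2 : Real.log (1 + (a ^ 2) ^ 2) ≤ 4 * a := by
    calc Real.log (1 + (a ^ 2) ^ 2) ≤ Real.log ((1 + a) ^ 4) := by
          apply Real.log_le_log (by positivity)
          nlinarith [ha0, pow_nonneg ha0 3, pow_nonneg ha0 2]
      _ = 4 * Real.log (1 + a) := by rw [Real.log_pow]; push_cast; ring
      _ ≤ 4 * a := by
        have := Real.log_le_sub_one_of_pos (x := 1 + a) (by positivity)
        linarith
  unfold regLog
  rw [h1]
  have : 2 * Real.sqrt δ * |u| ^ (-(1 / 2) : ℝ) = 2 * a := by rw [ha]; ring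
  linarith

lemma BoundedOnCut.integrable_log (hμ : BoundedOnCut μ M) (x : ℝ) :
    Integrable (fun y => Real.log |x - y|) μ := by
  have h := (hμ.convolution_le (h := fun u => ‖Real.log |u|‖) (fun u => norm_nonneg _)
    (integrableOn_abs_log (|x| + 2)) le_rfl).1
  refine h.mono' ?_ (Filter.Eventually.of_forall fun y => le_rfl)
  exact Measurable.aestronglyMeasurable (by fun_prop)

lemma BoundedOnCut.integrable_of_continuous [IsFiniteMeasure μ] {E : Type*} [NormedAddCommGroup E]
    [SecondCountableTopology E] (hμ : BoundedOnCut μ M) {f : ℝ → E} (hf : Continuous f) :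
    Integrable f μ := by
  obtain ⟨C, hC⟩ := (isCompact_Icc (a := (-2 : ℝ)) (b := 2)).exists_bound_of_continuousOn
    hf.continuousOn
  refine Integrable.of_bound hf.aestronglyMeasurable C ?_
  filter_upwards [hμ.ae_mem] with x hx using hC x hx

lemma BoundedOnCut.integrable_regLog [IsFiniteMeasure μ] (hμ : BoundedOnCut μ M) {δ : ℝ}
    (hδ : 0 < δ) (x : ℝ) : Integrable (fun y => regLog δ (x - y)) μ :=
  hμ.integrable_of_continuous ((continuous_regLog hδ).comp (by fun_prop))

lemma BoundedOnCut.logPot_le_regPot [IsFiniteMeasure μ] (hμ : BoundedOnCut μ M) {δ : ℝ}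
    (hδ : 0 < δ) (x : ℝ) : logPot μ x ≤ regPot μ δ x := by
  apply integral_mono_ae (hμ.integrable_log x) (hμ.integrable_regLog hδ x)
  filter_upwards [hμ.ae_ne x] with y hy
  exact log_abs_le_regLog (sub_ne_zero.2 hy.symm)

/-- The regularised potential exceeds the potential by `O(√δ)`, uniformly on bounded sets. -/
lemma BoundedOnCut.regPot_le [IsFiniteMeasure μ] (hμ : BoundedOnCut μ M) {δ R : ℝ}
    (hδ : 0 < δ) {x : ℝ} (hx : |x| + 2 ≤ R) :
    regPot μ δ x ≤ logPot μ x
      + 2 * (M * ∫ u in Set.Icc (-R) R, |u| ^ (-(1 / 2) : ℝ)) * Real.sqrt δ := by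
  obtain ⟨hi, hle⟩ := hμ.convolution_le (h := fun u => |u| ^ (-(1 / 2) : ℝ))
    (fun u => by positivity) (integrableOn_rsqrt R) hx
  have h1 : regPot μ δ x - logPot μ x ≤ ∫ y, 2 * Real.sqrt δ * |x - y| ^ (-(1 / 2) : ℝ) ∂μ := by
    unfold regPot logPot
    rw [← integral_sub (hμ.integrable_regLog hδ x) (hμ.integrable_log x)]
    apply integral_mono_ae ((hμ.integrable_regLog hδ x).sub (hμ.integrable_log x))
      (hi.const_mul _)
    filter_upwards [hμ.ae_ne x] with y hy
    exact regLog_sub_log_le hδ (sub_ne_zero.2 hy.symm)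
  rw [integral_const_mul] at h1
  have : 2 * Real.sqrt δ * ∫ y, |x - y| ^ (-(1 / 2) : ℝ) ∂μ
      ≤ 2 * Real.sqrt δ * (M * ∫ u in Set.Icc (-R) R, |u| ^ (-(1 / 2) : ℝ)) := by
    gcongr
  linarith

lemma BoundedOnCut.integrable_log_prod [IsFiniteMeasure μ] (hμ : BoundedOnCut μ M) :
    Integrable (fun w : ℝ × ℝ => Real.log |w.1 - w.2|) (μ.prod μ) := by
  have hm : AEStronglyMeasurable (fun w : ℝ × ℝ => Real.log |w.1 - w.2|) (μ.prod μ) :=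
    Measurable.aestronglyMeasurable (by fun_prop)
  rw [integrable_prod_iff hm]
  refine ⟨Filter.Eventually.of_forall fun x => hμ.integrable_log x, ?_⟩
  refine Integrable.of_bound hm.norm.integral_prod_right'
    (M * ∫ u in Set.Icc (-4 : ℝ) 4, ‖Real.log |u|‖) ?_
  filter_upwards [hμ.ae_mem] with x hx
  have h := (hμ.convolution_le (h := fun u => ‖Real.log |u|‖) (fun u => norm_nonneg _)
    (integrableOn_abs_log 4) (x := x) (by linarith [abs_le.2 hx])).2
  rw [Real.norm_eq_abs, abs_of_nonneg (integral_nonneg fun y => norm_nonneg _)]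
  exact h

lemma BoundedOnCut.integrable_logPot [IsFiniteMeasure μ] (hμ : BoundedOnCut μ M) :
    Integrable (logPot μ) μ :=
  hμ.integrable_log_prod.integral_prod_left

lemma BoundedOnCut.poisson_le (hμ : BoundedOnCut μ M) {y : ℝ} (hy : 0 < y) (a : ℝ) :
    ∫ x, y / ((a - x) ^ 2 + y ^ 2) ∂μ ≤ M * Real.pi := by
  set H : ℝ → ℝ := fun u => y⁻¹ * (1 + (y⁻¹ * u) ^ 2)⁻¹ with hH
  have e : ∀ x, y / ((a - x) ^ 2 + y ^ 2) = H (a - x) := by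
    intro x; simp only [hH]; field_simp; ring
  simp_rw [e]
  have hHi : Integrable H :=
    (integrable_inv_one_add_sq.comp_mul_left' (inv_ne_zero hy.ne')).const_mul _
  have hsm : Integrable (fun x => H (a - x)) (ENNReal.ofReal M • volume) :=
    (hHi.comp_sub_left a).smul_measure ENNReal.ofReal_ne_top
  refine (integral_mono_measure hμ.le_volume (Filter.Eventually.of_forall fun x => ?_) hsm).trans
    (le_of_eq ?_)
  · simp only [hH, Pi.zero_apply]; positivity
  · rw [integral_smul_measure, ENNReal.toReal_ofReal hμ.pos.le, smul_eq_mul,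
      integral_sub_left_eq_self H volume a]
    simp only [hH]
    rw [integral_const_mul, Measure.integral_comp_mul_left (fun u : ℝ => (1 + u ^ 2)⁻¹) y⁻¹,
      integral_univ_inv_one_add_sq, inv_inv, abs_of_pos hy, smul_eq_mul]
    field_simp

end Reference

/-! ### The charge distribution `∑ δ_{λᵢ} - nμ` -/

section Charge

lemma measurableEmbedding_inl {α β : Type*} [MeasurableSpace α] [MeasurableSpace β] :
    MeasurableEmbedding (Sum.inl : α → α ⊕ β) :=
  ⟨Sum.inl_injective, measurable_inl, fun {_} hs => measurableSet_inl_image.2 hs⟩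

lemma measurableEmbedding_inr {α β : Type*} [MeasurableSpace α] [MeasurableSpace β] :
    MeasurableEmbedding (Sum.inr : β → α ⊕ β) :=
  ⟨Sum.inr_injective, measurable_inr, fun {_} hs => measurableSet_inr_image.2 hs⟩

/-- The total variation of the charge `∑ δ_{λ_i} - n μ`, kept as a measure on a disjoint union so
that point charges and background carry separate signs. -/
noncomputable def chargeMeasure (n : ℕ) (μ : Measure ℝ) : Measure (Fin n ⊕ ℝ) :=
  Measure.map Sum.inl Measure.count + Measure.map Sum.inr ((n : NNReal) • μ)

/-- The sign of the charge. -/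
def chargeSign (n : ℕ) : Fin n ⊕ ℝ → ℝ := Sum.elim (fun _ => 1) (fun _ => -1)

/-- The position of the charge. -/
def chargePos {n : ℕ} (Λ : Fin n → ℝ) : Fin n ⊕ ℝ → ℝ := Sum.elim Λ id

variable {n : ℕ} {μ : Measure ℝ} {M : ℝ}

lemma integrable_charge {E : Type*} [NormedAddCommGroup E]
    {F : Fin n ⊕ ℝ → E} (hF : Integrable (fun x => F (Sum.inr x)) μ) :
    Integrable F (chargeMeasure n μ) := by
  unfold chargeMeasure
  rw [integrable_add_measure]
  constructor
  · rw [measurableEmbedding_inl.integrable_map_iff]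
    exact Integrable.of_finite
  · rw [measurableEmbedding_inr.integrable_map_iff]
    exact hF.smul_measure_nnreal

lemma integral_charge {E : Type*} [NormedAddCommGroup E] [NormedSpace ℝ E] [CompleteSpace E]
    {F : Fin n ⊕ ℝ → E} (hF : Integrable (fun x => F (Sum.inr x)) μ) :
    ∫ w, F w ∂(chargeMeasure n μ) = ∑ i, F (Sum.inl i) + (n : ℝ) • ∫ x, F (Sum.inr x) ∂μ := by
  have h := integrable_charge (n := n) hF
  unfold chargeMeasure at h ⊢
  rw [integrable_add_measure] at h
  rw [integral_add_measure h.1 h.2, measurableEmbedding_inl.integral_map,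
    measurableEmbedding_inr.integral_map, integral_smul_nnreal_measure]
  congr 1
  rw [integral_fintype Integrable.of_finite]
  simp [Measure.real]

variable [IsProbabilityMeasure μ]

instance : IsFiniteMeasure (chargeMeasure n μ) := by
  unfold chargeMeasure
  infer_instance

lemma continuous_stieltjes_kernel {z : ℂ} (hz : z.im ≠ 0) :
    Continuous (fun x : ℝ => 1 / (z - x)) := by
  refine continuous_const.div (by fun_prop) fun x h => hz ?_
  have := congrArg Complex.im h
  simpa using this

lemma BoundedOnCut.integrable_regLog_prod (hμ : BoundedOnCut μ M) {δ : ℝ} (hδ : 0 < δ) :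
    Integrable (fun w : ℝ × ℝ => regLog δ (w.1 - w.2)) (μ.prod μ) := by
  obtain ⟨C, hC⟩ := (isCompact_Icc (a := (-4 : ℝ)) (b := 4)).exists_bound_of_continuousOn
    (continuous_regLog hδ).continuousOn
  refine Integrable.of_bound
    ((continuous_regLog hδ).comp (by fun_prop)).aestronglyMeasurable C ?_
  filter_upwards [Measure.quasiMeasurePreserving_fst.ae hμ.ae_mem,
    Measure.quasiMeasurePreserving_snd.ae hμ.ae_mem] with w h1 h2
  apply hC
  constructor <;> linarith [h1.1, h1.2, h2.1, h2.2]

lemma BoundedOnCut.integrable_regPot (hμ : BoundedOnCut μ M) {δ : ℝ} (hδ : 0 < δ) :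
    Integrable (regPot μ δ) μ :=
  (hμ.integrable_regLog_prod hδ).integral_prod_left

lemma regLog_neg (δ u : ℝ) : regLog δ (-u) = regLog δ u := by
  unfold regLog; rw [neg_sq]

/-- The linear statistic `∑ 1/(z-λ_i) - n ∫ 1/(z-x) dμ`. -/
noncomputable def linStat (μ : Measure ℝ) {n : ℕ} (Λ : Fin n → ℝ) (z : ℂ) : ℂ :=
  ∑ i, 1 / (z - Λ i) - n * ∫ x : ℝ, 1 / (z - x) ∂μ

/-- The Stieltjes transform of `∑ δ_{λ_i} - n μ` is controlled by the regularised logarithmic energy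
of that charge distribution. -/
lemma BoundedOnCut.linStat_sq_le (hμ : BoundedOnCut μ M) (Λ : Fin n → ℝ) {z : ℂ} {δ : ℝ}
    (hδ : 0 < δ) (hz : δ ≤ z.im) :
    z.im ^ 2 / 4 * ‖linStat μ Λ z‖ ^ 2 ≤
      - ∑ i, ∑ j, regLog δ (Λ i - Λ j) + 2 * n * ∑ i, regPot μ δ (Λ i)
        - n ^ 2 * ∫ x, regPot μ δ x ∂μ := by
  have hz0 : z.im ≠ 0 := (hδ.trans_le hz).ne'
  set s := chargeSign n with hs
  set p := chargePos Λ with hp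
  have hsm : Measurable s := by
    unfold s chargeSign; exact Measurable.sumElim measurable_const measurable_const
  have hpm : Measurable p := by
    unfold p chargePos; exact Measurable.sumElim (measurable_of_finite _) measurable_id
  have h1 : ∀ w, |s w| ≤ 1 := by
    rintro (i | x) <;> simp [s, chargeSign]
  have hsum : ∀ i, |Λ i| ≤ ∑ j, |Λ j| := fun i =>
    Finset.single_le_sum (f := fun j => |Λ j|) (fun j _ => abs_nonneg _) (Finset.mem_univ i)
  set R := 2 + ∑ i, |Λ i| with hRdef
  have hR0 : 0 ≤ ∑ i, |Λ i| := Finset.sum_nonneg fun i _ => abs_nonneg _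
  have hR : ∀ᵐ w ∂(chargeMeasure n μ), |p w| ≤ R := by
    have hms : MeasurableSet {w | |p w| ≤ R} :=
      measurableSet_le hpm.abs measurable_const
    unfold chargeMeasure
    rw [ae_add_measure_iff]
    constructor
    · rw [ae_map_iff measurableEmbedding_inl.measurable.aemeasurable hms]
      filter_upwards with i
      simp only [p, chargePos, Sum.elim_inl]
      linarith [hsum i]
    · rw [ae_map_iff measurableEmbedding_inr.measurable.aemeasurable hms]
      refine Measure.ae_smul_measure ?_ _
      filter_upwards [hμ.ae_mem] with x hx
      simp only [p, chargePos, Sum.elim_inr, id]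
      linarith [abs_le.2 hx]
  have h0 : ∫ w, s w ∂(chargeMeasure n μ) = 0 := by
    rw [integral_charge (by simp only [s, chargeSign, Sum.elim_inr]; exact integrable_const _)]
    simp [s, chargeSign]
  have key := stieltjes_sq_le_energy hsm hpm h1 hR h0 hδ hz
  have hst : ∫ w, (s w : ℂ) / (z - p w) ∂(chargeMeasure n μ) = linStat μ Λ z := by
    have hi : Integrable (fun x : ℝ => (((-1 : ℝ) : ℂ)) / (z - x)) μ := by
      refine (hμ.integrable_of_continuous (continuous_stieltjes_kernel hz0)).neg.congr ?_
      filter_upwards with x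
      simp only [Pi.neg_apply]; push_cast; ring
    rw [integral_charge (by simpa only [s, p, chargeSign, chargePos, Sum.elim_inr, id] using hi)]
    simp only [s, p, chargeSign, chargePos, Sum.elim_inr, Sum.elim_inl, id, linStat]
    have e : ∀ x : ℝ, (((-1 : ℝ) : ℂ)) / (z - x) = - (1 / (z - x)) := by
      intro x; push_cast; ring
    simp_rw [e, integral_neg]
    rw [Complex.real_smul]
    push_cast
    ring
  rw [hst] at key
  refine key.trans (le_of_eq ?_)
  have hbd : Integrable (fun w : (Fin n ⊕ ℝ) × (Fin n ⊕ ℝ) =>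
      s w.1 * s w.2 * regLog δ (p w.1 - p w.2))
      ((chargeMeasure n μ).prod (chargeMeasure n μ)) := by
    obtain ⟨C, hC⟩ := (isCompact_Icc (a := -(2 * R)) (b := 2 * R)).exists_bound_of_continuousOn
      (continuous_regLog hδ).continuousOn
    refine Integrable.of_bound (Measurable.aestronglyMeasurable ?_) C ?_
    · exact Measurable.mul (by fun_prop) ((continuous_regLog hδ).measurable.comp (by fun_prop))
    · filter_upwards [Measure.quasiMeasurePreserving_fst.ae hR,
        Measure.quasiMeasurePreserving_snd.ae hR] with w h2 h3
      rw [abs_le] at h2 h3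
      have h4 := hC (p w.1 - p w.2) ⟨by linarith [h2.1, h3.2], by linarith [h2.2, h3.1]⟩
      rw [norm_mul]
      have h5 : ‖s w.1 * s w.2‖ ≤ 1 := by
        rw [norm_mul]; exact mul_le_one₀ (h1 _) (norm_nonneg _) (h1 _)
      nlinarith [norm_nonneg (regLog δ (p w.1 - p w.2))]
  rw [integral_prod _ hbd]
  have hinner : ∀ w, ∫ v, s w * s v * regLog δ (p w - p v) ∂(chargeMeasure n μ)
      = s w * (∑ j, regLog δ (p w - Λ j) - n * regPot μ δ (p w)) := by
    intro w
    have hi := hμ.integrable_regLog hδ (p w)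
    rw [integral_charge (by
      simp only [s, p, chargeSign, chargePos, Sum.elim_inr, id]
      exact hi.const_mul _)]
    have e1 : ∀ x : ℝ, s w * s (Sum.inr x) * regLog δ (p w - p (Sum.inr x))
        = -(s w) * regLog δ (p w - x) := by
      intro x; simp only [s, p, chargeSign, chargePos, Sum.elim_inr, id]; ring
    have e2 : ∀ j : Fin n, s w * s (Sum.inl j) * regLog δ (p w - p (Sum.inl j))
        = s w * regLog δ (p w - Λ j) := by
      intro j; simp only [s, p, chargeSign, chargePos, Sum.elim_inl]; ring
    simp_rw [e1, e2]
    rw [integral_const_mul, ← Finset.mul_sum, smul_eq_mul]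
    unfold regPot
    ring
  simp_rw [hinner]
  have hiL : ∀ j, Integrable (fun x => regLog δ (x - Λ j)) μ := fun j =>
    hμ.integrable_of_continuous ((continuous_regLog hδ).comp (by fun_prop))
  have hisum : Integrable (fun x => ∑ j, regLog δ (x - Λ j)) μ :=
    integrable_finsetSum _ fun j _ => hiL j
  have hiP := hμ.integrable_regPot hδ
  rw [integral_charge (by
    simp only [s, p, chargeSign, chargePos, Sum.elim_inr, id]
    exact (hisum.sub (hiP.const_mul _)).const_mul _)]
  simp only [s, p, chargeSign, chargePos, Sum.elim_inr, Sum.elim_inl, id, one_mul, smul_eq_mul]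
  rw [integral_const_mul, integral_sub hisum (hiP.const_mul _), integral_const_mul,
    integral_finsetSum _ fun j _ => hiL j, Finset.sum_sub_distrib, ← Finset.mul_sum]
  have e3 : ∀ j, ∫ x, regLog δ (x - Λ j) ∂μ = regPot μ δ (Λ j) := by
    intro j
    unfold regPot
    congr 1; ext x
    rw [← regLog_neg, neg_sub]
  simp_rw [e3]
  ring

end Charge

/-! ### The weight of the ensemble -/

section Weight

variable {β : ℝ} {V : ℝ → ℝ} {n : ℕ}

lemma betaWeight_nonneg (Λ : Fin n → ℝ) : 0 ≤ betaWeight β V n Λ := by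
  unfold betaWeight
  positivity

lemma continuous_betaWeight (hβ : 0 < β) (hV : Continuous V) :
    Continuous (betaWeight β V n) := by
  unfold betaWeight
  refine Continuous.mul (by fun_prop) ?_
  refine continuous_finsetProd _ fun i _ => continuous_finsetProd _ fun j _ => ?_
  exact Continuous.rpow_const (by fun_prop) fun _ => Or.inr hβ.le

lemma prod_abs_sub_eq_vandermonde (Λ : Fin n → ℝ) :
    ∏ i, ∏ j ∈ Finset.Ioi i, |Λ i - Λ j| ^ β = |(Matrix.vandermonde Λ).det| ^ β := by
  rw [Matrix.det_vandermonde, Finset.abs_prod, ← Real.finsetProd_rpow _ _ fun i _ => abs_nonneg _]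
  refine Finset.prod_congr rfl fun i _ => ?_
  rw [Finset.abs_prod, ← Real.finsetProd_rpow _ _ fun i _ => abs_nonneg _]
  refine Finset.prod_congr rfl fun j _ => ?_
  rw [abs_sub_comm]

/-- The weight is symmetric; the interaction term is a power of a Vandermonde determinant. -/
lemma betaWeight_comp_perm (Λ : Fin n → ℝ) (σ : Equiv.Perm (Fin n)) :
    betaWeight β V n (fun i => Λ (σ i)) = betaWeight β V n Λ := by
  unfold betaWeight
  rw [prod_abs_sub_eq_vandermonde, prod_abs_sub_eq_vandermonde]
  congr 1
  · exact Equiv.prod_comp σ fun i => Real.exp (-((n : ℝ) * β * V (Λ i)) / 2)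
  · congr 1
    have : Matrix.vandermonde (fun i => Λ (σ i)) = (Matrix.vandermonde Λ).submatrix σ id := by
      ext i j; simp [Matrix.vandermonde]
    rw [this, Matrix.det_permute, abs_mul]
    have h : |(((Equiv.Perm.sign σ : ℤˣ) : ℤ) : ℝ)| = 1 := by
      rcases Int.units_eq_one_or (Equiv.Perm.sign σ) with h | h <;> simp [h]
    rw [h, one_mul]

/-- Twice the exponent of the weight, divided by `β`. -/
noncomputable def logWeight (V : ℝ → ℝ) {n : ℕ} (Λ : Fin n → ℝ) : ℝ :=
  -(n : ℝ) * ∑ i, V (Λ i) + ∑ i, ∑ j ∈ {i}ᶜ, Real.log |Λ i - Λ j|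

lemma betaWeight_eq_exp {Λ : Fin n → ℝ} (hΛ : Function.Injective Λ) :
    betaWeight β V n Λ = Real.exp (β / 2 * logWeight V Λ) := by
  have h1 : ∀ i, ∏ j ∈ Finset.Ioi i, |Λ i - Λ j| ^ β
      = Real.exp (∑ j ∈ Finset.Ioi i, β * Real.log |Λ i - Λ j|) := by
    intro i
    rw [Real.exp_sum]
    refine Finset.prod_congr rfl fun j hj => ?_
    have hne : Λ i ≠ Λ j := fun h => (Finset.mem_Ioi.1 hj).ne (hΛ h)
    rw [Real.rpow_def_of_pos (abs_pos.2 (sub_ne_zero.2 hne)), mul_comm]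
  have h2 := Finset.sum_sum_Ioi_add_eq_sum_sum_off_diag (fun j i : Fin n => Real.log |Λ i - Λ j|)
  have h3 : ∀ i j : Fin n, Real.log |Λ i - Λ j| + Real.log |Λ j - Λ i|
      = 2 * Real.log |Λ i - Λ j| := by
    intro i j; rw [abs_sub_comm (Λ j)]; ring
  simp_rw [h3, ← Finset.mul_sum] at h2
  unfold betaWeight logWeight
  simp_rw [h1, ← Finset.mul_sum]
  rw [← Real.exp_sum, ← Real.exp_sum, ← Real.exp_add, ← h2]
  congr 1
  rw [← Finset.sum_div, Finset.sum_neg_distrib, ← Finset.mul_sum, ← Finset.mul_sum]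
  ring

lemma betaWeight_eq_zero (hβ : 0 < β) {Λ : Fin n → ℝ} (hΛ : ¬ Function.Injective Λ) :
    betaWeight β V n Λ = 0 := by
  unfold betaWeight
  rw [prod_abs_sub_eq_vandermonde]
  have : (Matrix.vandermonde Λ).det = 0 := by
    by_contra h
    exact hΛ (Matrix.det_vandermonde_ne_zero_iff.1 h)
  rw [this, abs_zero, Real.zero_rpow hβ.ne', mul_zero]

variable {μ : Measure ℝ} [IsProbabilityMeasure μ] {M c R : ℝ}

/-- Pointwise upper bound: the weight is at most its equilibrium value, up to a regularisation error,
times a Gaussian factor in the linear statistic. -/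
lemma betaWeight_le (hβ : 0 < β) (hμ : BoundedOnCut μ M) {Λ : Fin n → ℝ}
    (hR : ∀ i, |Λ i| + 2 ≤ R) (hV : ∀ i, 2 * logPot μ (Λ i) - V (Λ i) ≤ c)
    {z : ℂ} {δ : ℝ} (hδ : 0 < δ) (hz : δ ≤ z.im) :
    betaWeight β V n Λ ≤ Real.exp (β / 2 * ((n : ℝ) ^ 2 * (c - ∫ x, logPot μ x ∂μ)
      - n * Real.log δ
      + 2 * (n : ℝ) ^ 2 * (2 * (M * ∫ u in Set.Icc (-R) R, |u| ^ (-(1 / 2) : ℝ)) * Real.sqrt δ)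
      - z.im ^ 2 / 4 * ‖linStat μ Λ z‖ ^ 2)) := by
  by_cases hΛ : Function.Injective Λ
  swap
  · rw [betaWeight_eq_zero hβ hΛ]; positivity
  rw [betaWeight_eq_exp hΛ]
  apply Real.exp_le_exp.2
  apply mul_le_mul_of_nonneg_left _ (by positivity)
  set K := 2 * (M * ∫ u in Set.Icc (-R) R, |u| ^ (-(1 / 2) : ℝ)) * Real.sqrt δ with hK
  have h1 := hμ.linStat_sq_le Λ hδ hz
  have h2 : ∀ i, -V (Λ i) ≤ c - 2 * regPot μ δ (Λ i) + 2 * K := by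
    intro i
    have := hμ.regPot_le hδ (hR i)
    have := hV i
    linarith
  have h3 : -(n : ℝ) * ∑ i, V (Λ i) ≤ n * ∑ i, (c - 2 * regPot μ δ (Λ i) + 2 * K) := by
    rw [neg_mul, ← mul_neg, ← Finset.sum_neg_distrib]
    exact mul_le_mul_of_nonneg_left (Finset.sum_le_sum fun i _ => h2 i) (Nat.cast_nonneg n)
  have h4 : ∑ i, (c - 2 * regPot μ δ (Λ i) + 2 * K)
      = n * c - 2 * ∑ i, regPot μ δ (Λ i) + n * (2 * K) := by
    rw [Finset.sum_add_distrib, Finset.sum_sub_distrib, ← Finset.mul_sum]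
    simp
  have h5 : ∑ i, ∑ j ∈ {i}ᶜ, Real.log |Λ i - Λ j|
      ≤ ∑ i, ∑ j, regLog δ (Λ i - Λ j) - n * Real.log δ := by
    have h6 : ∀ i, ∑ j ∈ {i}ᶜ, Real.log |Λ i - Λ j|
        ≤ ∑ j, regLog δ (Λ i - Λ j) - Real.log δ := by
      intro i
      rw [Fintype.sum_eq_add_sum_compl i]
      have e : regLog δ (Λ i - Λ i) = Real.log δ := by
        unfold regLog
        rw [sub_self, zero_pow two_ne_zero, zero_add, Real.log_pow]; push_cast; ring
      rw [e, add_sub_cancel_left]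
      refine Finset.sum_le_sum fun j hj => log_abs_le_regLog ?_
      rw [Finset.mem_compl, Finset.mem_singleton] at hj
      exact sub_ne_zero.2 fun h => hj (hΛ h).symm
    refine (Finset.sum_le_sum fun i _ => h6 i).trans (le_of_eq ?_)
    rw [Finset.sum_sub_distrib]; simp
  have h7 : ∫ x, logPot μ x ∂μ ≤ ∫ x, regPot μ δ x ∂μ :=
    integral_mono hμ.integrable_logPot (hμ.integrable_regPot hδ) fun x => hμ.logPot_le_regPot hδ x
  have h8 : (n : ℝ) ^ 2 * ∫ x, logPot μ x ∂μ ≤ (n : ℝ) ^ 2 * ∫ x, regPot μ δ x ∂μ := by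
    gcongr
  unfold logWeight
  rw [h4] at h3
  nlinarith [h1, h3, h5, h8]

end Weight

/-! ### Lower bound on the partition function -/

section LowerBound

variable {β : ℝ} {V : ℝ → ℝ} {n : ℕ} {μ : Measure ℝ} [IsProbabilityMeasure μ] {M c : ℝ}

/-- The product measure `μ ^ n` has density at most `M ^ n` on the cube `[a, b] ^ n ⊇ [-2, 2] ^ n`. -/
lemma BoundedOnCut.pi_le (hμ : BoundedOnCut μ M) (n : ℕ) {a b : ℝ} (ha : a ≤ -2) (hb : 2 ≤ b) :
    Measure.pi (fun _ : Fin n => μ)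
      ≤ ENNReal.ofReal (M ^ n) • volume.restrict (Set.univ.pi fun _ : Fin n => Set.Icc a b) := by
  have : IsFiniteMeasure (ENNReal.ofReal M • volume.restrict (Set.Icc a b)) :=
    Measure.smul_finite _ ENNReal.ofReal_ne_top
  have e : ENNReal.ofReal (M ^ n) • volume.restrict (Set.univ.pi fun _ : Fin n => Set.Icc a b)
      = Measure.pi (fun _ : Fin n => ENNReal.ofReal M • volume.restrict (Set.Icc a b)) := by
    symm
    apply Measure.pi_eq
    intro s hs
    rw [Measure.smul_apply, volume_pi, Measure.restrict_pi_pi, Measure.pi_pi]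
    simp [Finset.prod_mul_distrib, ENNReal.ofReal_pow hμ.pos.le]
  rw [e]
  have hle : μ ≤ ENNReal.ofReal M • volume.restrict (Set.Icc a b) := by
    refine hμ.le.trans ?_
    gcongr
  refine Measure.le_iff.2 fun s hs => ?_
  have h2 : (Measure.pi (fun _ : Fin n => μ)).toOuterMeasure
      ≤ OuterMeasure.pi fun _ : Fin n =>
        (ENNReal.ofReal M • volume.restrict (Set.Icc a b)).toOuterMeasure := by
    rw [OuterMeasure.le_pi]
    intro t _
    refine (Measure.pi_pi (fun _ : Fin n => μ) t).le.trans ?_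
    exact Finset.prod_le_prod' fun i _ => hle (t i)
  rw [Measure.pi_def (fun _ : Fin n => ENNReal.ofReal M • volume.restrict (Set.Icc a b)),
    toMeasure_apply _ _ hs]
  exact h2 s


lemma map_pair_pi {i j : Fin n} (hij : i ≠ j) :
    MeasurePreserving (fun Λ : Fin n → ℝ => (Λ i, Λ j)) (Measure.pi fun _ => μ) (μ.prod μ) := by
  have h := (ProbabilityTheory.iIndepFun_pi (μ := fun _ : Fin n => μ)
    (X := fun _ : Fin n => (id : ℝ → ℝ)) fun _ => aemeasurable_id).indepFun hij
  have h2 := (ProbabilityTheory.indepFun_iff_map_prod_eq_prod_map_map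
    (measurable_pi_apply i).aemeasurable (measurable_pi_apply j).aemeasurable).1 h
  refine ⟨by fun_prop, ?_⟩
  have e : ∀ l : Fin n, (Measure.pi fun _ : Fin n => μ).map (fun Λ => Λ l) = μ :=
    fun l => (measurePreserving_eval (fun _ : Fin n => μ) l).map_eq
  rw [e i, e j] at h2
  exact h2

lemma BoundedOnCut.ae_injective (hμ : BoundedOnCut μ M) :
    ∀ᵐ Λ ∂(Measure.pi fun _ : Fin n => μ), Function.Injective Λ := by
  have h : ∀ᵐ w ∂(μ.prod μ), w.1 ≠ w.2 := by
    rw [Measure.ae_prod_iff_ae_ae]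
    · exact Filter.Eventually.of_forall fun x => (hμ.ae_ne x).mono fun y hy => hy.symm
    · exact (measurableSet_eq_fun measurable_fst measurable_snd).compl
  have h2 : ∀ i j : Fin n, ∀ᵐ Λ ∂(Measure.pi fun _ : Fin n => μ), i ≠ j → Λ i ≠ Λ j := by
    intro i j
    by_cases hij : i = j
    · simp [hij]
    · filter_upwards [(map_pair_pi (μ := μ) hij).quasiMeasurePreserving.ae h] with Λ hΛ _ using hΛ
  filter_upwards [ae_all_iff.2 fun i => ae_all_iff.2 (h2 i)] with Λ hΛ i j hij
  by_contra hne
  exact hΛ i j hne hij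

/-- The mean of the logarithm of the weight under independent samples of the equilibrium measure. -/
lemma BoundedOnCut.integral_logWeight (hμ : BoundedOnCut μ M) (hVc : Continuous V)
    (hV : ∀ x ∈ Set.Icc (-2 : ℝ) 2, 2 * logPot μ x - V x = c) :
    Integrable (logWeight V (n := n)) (Measure.pi fun _ => μ) ∧
      ∫ Λ, logWeight V (n := n) Λ ∂(Measure.pi fun _ => μ)
        = (n : ℝ) ^ 2 * (c - ∫ x, logPot μ x ∂μ) - n * ∫ x, logPot μ x ∂μ := by
  set J := ∫ x, logPot μ x ∂μ with hJ
  have hVi : Integrable V μ := hμ.integrable_of_continuous hVc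
  have hVint : ∫ x, V x ∂μ = 2 * J - c := by
    have : ∫ x, V x ∂μ = ∫ x, (2 * logPot μ x - c) ∂μ := by
      refine integral_congr_ae ?_
      filter_upwards [hμ.ae_mem] with x hx
      linarith [hV x hx]
    rw [this, integral_sub (hμ.integrable_logPot.const_mul 2) (integrable_const c),
      integral_const_mul]
    simp [hJ]
  have hm : ∀ i : Fin n, MeasurePreserving (fun Λ : Fin n → ℝ => Λ i) (Measure.pi fun _ => μ) μ :=
    fun i => measurePreserving_eval (fun _ : Fin n => μ) i
  have hV1 : ∀ i : Fin n, Integrable (fun Λ : Fin n → ℝ => V (Λ i)) (Measure.pi fun _ => μ) :=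
    fun i => (hm i).integrable_comp_of_integrable hVi
  have hV2 : ∀ i : Fin n, ∫ Λ : Fin n → ℝ, V (Λ i) ∂(Measure.pi fun _ => μ) = 2 * J - c := by
    intro i
    have := integral_map (hm i).measurable.aemeasurable
      (hVc.aestronglyMeasurable (μ := Measure.map _ (Measure.pi fun _ => μ)))
    rw [← hVint, ← this, (hm i).map_eq]
  have hL1 : ∀ i j : Fin n, j ∈ ({i}ᶜ : Finset (Fin n)) →
      Integrable (fun Λ : Fin n → ℝ => Real.log |Λ i - Λ j|) (Measure.pi fun _ => μ) := by
    intro i j hij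
    have hij' : i ≠ j := by simpa [eq_comm] using hij
    exact (map_pair_pi hij').integrable_comp_of_integrable hμ.integrable_log_prod
  have hL2 : ∀ i j : Fin n, j ∈ ({i}ᶜ : Finset (Fin n)) →
      ∫ Λ : Fin n → ℝ, Real.log |Λ i - Λ j| ∂(Measure.pi fun _ => μ) = J := by
    intro i j hij
    have hij' : i ≠ j := by simpa [eq_comm] using hij
    have := integral_map (μ := Measure.pi fun _ : Fin n => μ)
      (map_pair_pi (μ := μ) hij').measurable.aemeasurable
      (f := fun w : ℝ × ℝ => Real.log |w.1 - w.2|)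
      (Measurable.aestronglyMeasurable (by fun_prop))
    rw [← this, (map_pair_pi hij').map_eq, integral_prod _ hμ.integrable_log_prod]
    rfl
  have hS1 : Integrable (fun Λ : Fin n → ℝ => -(n : ℝ) * ∑ i, V (Λ i)) (Measure.pi fun _ => μ) :=
    (integrable_finsetSum _ fun i _ => hV1 i).const_mul _
  have hS2 : Integrable (fun Λ : Fin n → ℝ => ∑ i, ∑ j ∈ {i}ᶜ, Real.log |Λ i - Λ j|)
      (Measure.pi fun _ => μ) :=
    integrable_finsetSum _ fun i _ => integrable_finsetSum _ fun j hj => hL1 i j hj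
  refine ⟨hS1.add hS2, ?_⟩
  unfold logWeight
  rw [integral_add hS1 hS2, integral_const_mul, integral_finsetSum _ fun i _ => hV1 i,
    integral_finsetSum _ fun i _ => integrable_finsetSum _ fun j hj => hL1 i j hj]
  have h3 : ∀ i : Fin n, ∫ Λ : Fin n → ℝ, ∑ j ∈ {i}ᶜ, Real.log |Λ i - Λ j| ∂(Measure.pi fun _ => μ)
      = (n - 1) * J := by
    intro i
    rw [integral_finsetSum _ fun j hj => hL1 i j hj, Finset.sum_congr rfl fun j hj => hL2 i j hj]
    have : 1 ≤ n := i.pos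
    simp [Finset.card_compl, Nat.cast_sub this]
  simp_rw [h3, hV2]
  simp
  ring

/-- Jensen's inequality: the partition function is bounded below by testing against independent
samples of the equilibrium measure. -/
lemma BoundedOnCut.resZ_ge (hμ : BoundedOnCut μ M) (hβ : 0 < β) (hVc : Continuous V)
    (hV : ∀ x ∈ Set.Icc (-2 : ℝ) 2, 2 * logPot μ x - V x = c) {a b : ℝ} (ha : a ≤ -2)
    (hb : 2 ≤ b) :
    Real.exp (β / 2 * ((n : ℝ) ^ 2 * (c - ∫ x, logPot μ x ∂μ) - n * ∫ x, logPot μ x ∂μ))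
      ≤ M ^ n * resZ β V a b n := by
  have hcomp : IsCompact (Set.univ.pi fun _ : Fin n => Set.Icc a b) :=
    isCompact_univ_pi fun _ => isCompact_Icc
  have hwi : IntegrableOn (betaWeight β V n) (Set.univ.pi fun _ : Fin n => Set.Icc a b) :=
    (continuous_betaWeight hβ hVc).continuousOn.integrableOn_compact hcomp
  have hle := hμ.pi_le n ha hb
  have hws : Integrable (betaWeight β V n) (ENNReal.ofReal (M ^ n) •
      volume.restrict (Set.univ.pi fun _ : Fin n => Set.Icc a b)) :=
    hwi.smul_measure ENNReal.ofReal_ne_top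
  have hwp : Integrable (betaWeight β V n) (Measure.pi fun _ => μ) := hws.mono_measure hle
  have hae : betaWeight β V n =ᵐ[Measure.pi fun _ => μ]
      fun Λ => Real.exp (β / 2 * logWeight V Λ) := by
    filter_upwards [hμ.ae_injective] with Λ hΛ using betaWeight_eq_exp hΛ
  obtain ⟨hLi, hLe⟩ := hμ.integral_logWeight (n := n) hVc hV
  calc _ = Real.exp (∫ Λ, β / 2 * logWeight V (n := n) Λ ∂(Measure.pi fun _ => μ)) := by
        rw [integral_const_mul, hLe]
    _ ≤ ∫ Λ, Real.exp (β / 2 * logWeight V (n := n) Λ) ∂(Measure.pi fun _ => μ) :=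
        convexOn_exp.map_integral_le Real.continuous_exp.continuousOn isClosed_univ
          (Filter.Eventually.of_forall fun _ => Set.mem_univ _) (hLi.const_mul _)
          (hwp.congr hae)
    _ = ∫ Λ, betaWeight β V n Λ ∂(Measure.pi fun _ => μ) := (integral_congr_ae hae).symm
    _ ≤ ∫ Λ, betaWeight β V n Λ ∂(ENNReal.ofReal (M ^ n) •
          volume.restrict (Set.univ.pi fun _ : Fin n => Set.Icc a b)) :=
        integral_mono_measure hle (Filter.Eventually.of_forall fun Λ => betaWeight_nonneg Λ) hws
    _ = M ^ n * resZ β V a b n := by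
        rw [integral_smul_measure, ENNReal.toReal_ofReal (pow_nonneg hμ.pos.le n)]
        rfl

end LowerBound

/-! ### Moments of the linear statistic -/

section Deviation

variable {β : ℝ} {V : ℝ → ℝ} {n : ℕ} {μ : Measure ℝ} {M c : ℝ}

lemma continuous_linStat {z : ℂ} (hz : z.im ≠ 0) :
    Continuous fun Λ : Fin n → ℝ => linStat μ Λ z := by
  unfold linStat
  refine Continuous.sub ?_ continuous_const
  exact continuous_finsetSum _ fun i _ =>
    (continuous_stieltjes_kernel hz).comp (continuous_apply i)

lemma norm_linStat_conj (Λ : Fin n → ℝ) (z : ℂ) :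
    ‖linStat μ Λ (starRingEnd ℂ z)‖ = ‖linStat μ Λ z‖ := by
  have e : linStat μ Λ (starRingEnd ℂ z) = starRingEnd ℂ (linStat μ Λ z) := by
    unfold linStat
    rw [map_sub, map_sum, map_mul, ← integral_conj]
    simp
  rw [e, RCLike.norm_conj]

variable [IsProbabilityMeasure μ]

/-- The second moment of the linear statistic at heights `≥ n⁻²`. The Gaussian factor in the pointwise
bound on the weight, compared with the lower bound on the partition function, gives an exponential
moment of order `exp (O(n log n))`. -/
lemma BoundedOnCut.exists_second_moment_le (hμ : BoundedOnCut μ M) (hβ : 0 < β) (hVc : Continuous V)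
    {ε : ℝ} (hε : 0 < ε) (hV : ∀ x ∈ Set.Icc (-2 : ℝ) 2, 2 * logPot μ x - V x = c)
    (hVle : ∀ x ∈ Set.Icc (-2 - ε) (2 + ε), 2 * logPot μ x - V x ≤ c) :
    ∃ C > 0, ∀ n : ℕ, 2 ≤ n → ∀ z : ℂ, ((n : ℝ) ^ 2)⁻¹ ≤ z.im →
      ∫ Λ in Set.univ.pi (fun _ : Fin n => Set.Icc (-2 - ε) (2 + ε)),
        (z.im * ‖linStat μ Λ z‖) ^ 2 * betaWeight β V n Λ
        ≤ C * (n * Real.log n) * resZ β V (-2 - ε) (2 + ε) n := by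
  set J := ∫ x, logPot μ x ∂μ with hJ
  set K := 2 * (M * ∫ u in Set.Icc (-(4 + ε)) (4 + ε), |u| ^ (-(1 / 2) : ℝ)) with hK
  set T := β * K + β / 2 * J + Real.log M + Real.log (4 + 2 * ε) with hT
  refine ⟨8 / β * (β + (|T| + 1) / Real.log 2), by positivity, fun n hn z hz => ?_⟩
  have hn0 : (0 : ℝ) < n := by exact_mod_cast (by omega : 0 < n)
  have hn1 : (1 : ℝ) ≤ n := by exact_mod_cast (by omega : 1 ≤ n)
  have hn2 : (2 : ℝ) ≤ n := by exact_mod_cast hn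
  have hδ : 0 < ((n : ℝ) ^ 2)⁻¹ := by positivity
  have hz0 : z.im ≠ 0 := (hδ.trans_le hz).ne'
  set Q := Set.univ.pi (fun _ : Fin n => Set.Icc (-2 - ε) (2 + ε)) with hQ
  set Z := resZ β V (-2 - ε) (2 + ε) n with hZ
  set B' := β / 2 * (2 * n * Real.log n + 2 * n * K + n * J) + n * Real.log M with hB'
  set B := B' + n * Real.log (4 + 2 * ε) with hB
  have hMn : Real.exp (n * Real.log M) = M ^ n := by
    rw [mul_comm, ← Real.rpow_def_of_pos hμ.pos, Real.rpow_natCast]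
  have hQn : Real.exp (n * Real.log (4 + 2 * ε)) = (4 + 2 * ε) ^ n := by
    rw [mul_comm, ← Real.rpow_def_of_pos (by positivity), Real.rpow_natCast]
  set Y : (Fin n → ℝ) → ℝ := fun Λ => β / 8 * (z.im * ‖linStat μ Λ z‖) ^ 2 with hY
  have hlow := hμ.resZ_ge (n := n) hβ hVc hV (a := -2 - ε) (b := 2 + ε) (by linarith) (by linarith)
  have hZ0 : 0 ≤ Z := by
    by_contra h
    push Not at h
    have := (Real.exp_pos _).trans_le hlow
    have := mul_neg_of_pos_of_neg (pow_pos hμ.pos n) h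
    linarith
  have hup : ∀ Λ ∈ Q, Real.exp (Y Λ) * betaWeight β V n Λ ≤ Real.exp B' * Z := by
    intro Λ hΛ
    have hΛ' : ∀ i, Λ i ∈ Set.Icc (-2 - ε) (2 + ε) := fun i => hΛ i (Set.mem_univ i)
    have h := betaWeight_le (β := β) (V := V) (c := c) (R := 4 + ε) hβ hμ (Λ := Λ)
      (fun i => by
        have : |Λ i| ≤ 2 + ε := abs_le.2 ⟨by linarith [(hΛ' i).1], (hΛ' i).2⟩
        linarith)
      (fun i => hVle _ (hΛ' i)) hδ hz
    have hs : Real.sqrt ((n : ℝ) ^ 2)⁻¹ = (n : ℝ)⁻¹ := by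
      rw [Real.sqrt_inv, Real.sqrt_sq hn0.le]
    have hl : Real.log ((n : ℝ) ^ 2)⁻¹ = -(2 * Real.log n) := by
      rw [Real.log_inv, Real.log_pow]; norm_num
    rw [hs, hl] at h
    have hKn : 2 * (n : ℝ) ^ 2 * (K * (n : ℝ)⁻¹) = 2 * n * K := by field_simp
    rw [← hK, hKn, ← hJ] at h
    calc Real.exp (Y Λ) * betaWeight β V n Λ
        ≤ Real.exp (Y Λ) * _ := mul_le_mul_of_nonneg_left h (Real.exp_pos _).le
      _ = Real.exp (β / 2 * (2 * n * Real.log n + 2 * n * K + n * J))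
            * Real.exp (β / 2 * ((n : ℝ) ^ 2 * (c - J) - n * J)) := by
          rw [← Real.exp_add, ← Real.exp_add]
          congr 1
          simp only [hY]
          ring
      _ ≤ Real.exp (β / 2 * (2 * n * Real.log n + 2 * n * K + n * J)) * (M ^ n * Z) :=
          mul_le_mul_of_nonneg_left hlow (Real.exp_pos _).le
      _ = Real.exp B' * Z := by rw [hB', Real.exp_add, hMn]; ring
  have hpt : ∀ Λ ∈ Q, Y Λ * betaWeight β V n Λ
      ≤ B * betaWeight β V n Λ + Real.exp (B' - B) * Z := by
    intro Λ hΛ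
    have h1 : Y Λ ≤ B + Real.exp (Y Λ - B) := by linarith [Real.add_one_le_exp (Y Λ - B)]
    have h2 := mul_le_mul_of_nonneg_right h1 (betaWeight_nonneg (β := β) (V := V) Λ)
    have h3 : Real.exp (Y Λ - B) * betaWeight β V n Λ ≤ Real.exp (B' - B) * Z := by
      rw [Real.exp_sub, Real.exp_sub, div_mul_eq_mul_div, div_mul_eq_mul_div]
      exact div_le_div_of_nonneg_right (hup Λ hΛ) (Real.exp_pos _).le
    linarith
  have hcomp : IsCompact Q := isCompact_univ_pi fun _ => isCompact_Icc
  have hQm : MeasurableSet Q := hcomp.measurableSet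
  have hwc := continuous_betaWeight (n := n) hβ hVc
  have hlc := continuous_linStat (n := n) (μ := μ) hz0
  have hi1 : IntegrableOn (fun Λ => Y Λ * betaWeight β V n Λ) Q := by
    refine ContinuousOn.integrableOn_compact hcomp (Continuous.continuousOn ?_)
    simp only [hY]
    fun_prop
  have hi2 : IntegrableOn (fun Λ => B * betaWeight β V n Λ) Q :=
    ContinuousOn.integrableOn_compact hcomp (Continuous.continuousOn (by fun_prop))
  have hi3 : IntegrableOn (fun _ : Fin n → ℝ => Real.exp (B' - B) * Z) Q :=
    ContinuousOn.integrableOn_compact hcomp continuousOn_const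
  have hvol : volume.real Q = (4 + 2 * ε) ^ n := by
    rw [hQ, Measure.real, volume_pi_pi]
    simp only [Real.volume_Icc, Finset.prod_const, Finset.card_univ, Fintype.card_fin,
      ENNReal.toReal_pow]
    rw [ENNReal.toReal_ofReal (by linarith)]
    ring
  have hint : ∫ Λ in Q, Y Λ * betaWeight β V n Λ ≤ (B + 1) * Z := by
    calc _ ≤ ∫ Λ in Q, (B * betaWeight β V n Λ + Real.exp (B' - B) * Z) :=
          setIntegral_mono_on hi1 (hi2.add hi3) hQm hpt
      _ = B * Z + (4 + 2 * ε) ^ n * (Real.exp (B' - B) * Z) := by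
          rw [integral_add hi2 hi3, integral_const_mul, setIntegral_const, hvol, smul_eq_mul]
          rfl
      _ = (B + 1) * Z := by
          have : (4 + 2 * ε) ^ n * Real.exp (B' - B) = 1 := by
            rw [← hQn, ← Real.exp_add, hB]; simp
          rw [← mul_assoc, this]; ring
  have hlog : Real.log 2 ≤ Real.log n := Real.log_le_log (by norm_num) hn2
  have hl2 : 0 < Real.log 2 := Real.log_pos (by norm_num)
  have hBle : B + 1 ≤ (β + (|T| + 1) / Real.log 2) * (n * Real.log n) := by
    have e : B = β * (n * Real.log n) + n * T := by rw [hB, hB', hT]; ring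
    have h1 : (n : ℝ) * T + 1 ≤ n * (|T| + 1) := by nlinarith [le_abs_self T]
    have h2 : (n : ℝ) * (|T| + 1) ≤ (|T| + 1) / Real.log 2 * (n * Real.log n) := by
      rw [div_mul_eq_mul_div, le_div_iff₀ hl2]
      have : (n : ℝ) * (|T| + 1) * Real.log 2 ≤ n * (|T| + 1) * Real.log n := by gcongr
      linarith
    rw [e]; linarith
  have e : ∫ Λ in Q, Y Λ * betaWeight β V n Λ
      = β / 8 * ∫ Λ in Q, (z.im * ‖linStat μ Λ z‖) ^ 2 * betaWeight β V n Λ := by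
    rw [← integral_const_mul]
    simp only [hY, mul_assoc]
  rw [e] at hint
  have hfin := hint.trans (mul_le_mul_of_nonneg_right hBle hZ0)
  calc _ = 8 / β * (β / 8 * ∫ Λ in Q, (z.im * ‖linStat μ Λ z‖) ^ 2 * betaWeight β V n Λ) := by
        field_simp
    _ ≤ 8 / β * _ := mul_le_mul_of_nonneg_left hfin (by positivity)
    _ = _ := by ring

/-- Comparison of the linear statistic at `z` with its value at the higher point `z + iδ`. The Poisson
kernel at `z + iδ` dominates the difference of the two Stieltjes kernels. -/
lemma BoundedOnCut.linStat_le (hμ : BoundedOnCut μ M) (Λ : Fin n → ℝ) {z : ℂ} (hz : 0 < z.im)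
    {δ : ℝ} (hδ : 0 < δ) :
    z.im * ‖linStat μ Λ z‖ ≤
      (z.im + δ) * ‖linStat μ Λ (z + δ * Complex.I)‖ + 2 * δ * (n * (M * Real.pi)) := by
  set η := z.im with hη
  set w := z + δ * Complex.I with hw
  have hwim : w.im = η + δ := by simp [hw, hη]
  have hwre : w.re = z.re := by simp [hw]
  set h : ℝ → ℝ := fun x => (η + δ) / ((z.re - x) ^ 2 + (η + δ) ^ 2) with hh
  have hzx : ∀ x : ℝ, η ≤ ‖z - x‖ := fun x => by
    have := Complex.abs_im_le_norm (z - x)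
    simp only [Complex.sub_im, Complex.ofReal_im, sub_zero] at this
    exact (le_abs_self _).trans this
  have hnw : ∀ x : ℝ, Complex.normSq (w - x) = (z.re - x) ^ 2 + (η + δ) ^ 2 := fun x => by
    rw [Complex.normSq_apply]; simp [hwim, hwre]; ring
  have hh0 : ∀ x, 0 ≤ h x := fun x => by simp only [hh]; positivity
  have him : ∀ x : ℝ, (1 / (w - x)).im = - h x := fun x => by
    rw [one_div, Complex.inv_im, hnw]
    simp only [Complex.sub_im, Complex.ofReal_im, sub_zero, hwim, hh, neg_div]
  have hzne : ∀ x : ℝ, z - x ≠ 0 := fun x => norm_pos_iff.1 (hz.trans_le (hzx x))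
  have hwne : ∀ x : ℝ, w - x ≠ 0 := fun x h0 => by
    have h1 := hnw x
    rw [h0, map_zero] at h1
    nlinarith [sq_nonneg (z.re - x), add_pos hz hδ]
  have hdiff : ∀ x : ℝ, ‖1 / (z - x) - 1 / (w - x)‖ ≤ δ / η * h x := fun x => by
    have e : 1 / (z - x) - 1 / (w - x) = δ * Complex.I / ((z - x) * (w - x)) := by
      rw [div_sub_div _ _ (hzne x) (hwne x), hw]; congr 1; ring
    have hn : ‖w - x‖ ^ 2 = (z.re - x) ^ 2 + (η + δ) ^ 2 := by
      rw [← hnw, Complex.normSq_eq_norm_sq]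
    have h1 : ‖w - x‖ ≤ ‖z - x‖ + δ := by
      have : w - x = (z - x) + δ * Complex.I := by rw [hw]; ring
      rw [this]
      refine (norm_add_le _ _).trans ?_
      simp [abs_of_pos hδ]
    have hzp := hz.trans_le (hzx x)
    have hwp : 0 < ‖w - x‖ := norm_pos_iff.2 (hwne x)
    rw [e, norm_div, norm_mul, norm_mul, Complex.norm_I, mul_one, Complex.norm_real,
      Real.norm_of_nonneg hδ.le]
    simp only [hh]
    rw [← hn, div_mul_div_comm, div_le_div_iff₀ (by positivity) (by positivity)]
    have h2 : η * ‖w - x‖ ≤ (η + δ) * ‖z - x‖ := by nlinarith [hzx x]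
    have h3 := mul_le_mul_of_nonneg_left h2 (mul_nonneg hδ.le hwp.le)
    nlinarith [h3]
  have hkz := hμ.integrable_of_continuous (continuous_stieltjes_kernel (z := z) hz.ne')
  have hwim0 : w.im ≠ 0 := by rw [hwim]; positivity
  have hkw := hμ.integrable_of_continuous (continuous_stieltjes_kernel (z := w) hwim0)
  have hhi : Integrable h μ := by
    refine (hkw.im.neg).congr (Filter.Eventually.of_forall fun x => ?_)
    have := him x
    simp only [Pi.neg_apply]
    change - (1 / (w - x)).im = h x
    rw [this, neg_neg]
  have hP : ∫ x, h x ∂μ ≤ M * Real.pi := hμ.poisson_le (add_pos hz hδ) z.re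
  have hint : ‖∫ x : ℝ, (1 / (z - x) - 1 / (w - x)) ∂μ‖ ≤ δ / η * ∫ x, h x ∂μ := by
    rw [← integral_const_mul]
    exact norm_integral_le_of_norm_le (hhi.const_mul _) (Filter.Eventually.of_forall hdiff)
  have hintim : (∫ x : ℝ, 1 / (w - x) ∂μ).im = - ∫ x, h x ∂μ := by
    have := integral_im hkw
    rw [← integral_neg]
    rw [show (∫ x : ℝ, 1 / (w - x) ∂μ).im = RCLike.im (∫ x : ℝ, 1 / (w - x) ∂μ) from rfl, ← this]
    exact integral_congr_ae (Filter.Eventually.of_forall him)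
  have hsum : ∑ i, h (Λ i) ≤ ‖linStat μ Λ w‖ + n * ∫ x, h x ∂μ := by
    have e : (linStat μ Λ w).im = - ∑ i, h (Λ i) + n * ∫ x, h x ∂μ := by
      unfold linStat
      rw [Complex.sub_im, Complex.im_sum, Finset.sum_congr rfl fun i _ => him (Λ i),
        Finset.sum_neg_distrib, ← Complex.ofReal_natCast, Complex.im_ofReal_mul, hintim]
      ring
    have := (neg_le_abs _).trans (Complex.abs_im_le_norm (linStat μ Λ w))
    linarith
  have hd : linStat μ Λ z - linStat μ Λ w
      = ∑ i, (1 / (z - Λ i) - 1 / (w - Λ i)) - n * ∫ x : ℝ, (1 / (z - x) - 1 / (w - x)) ∂μ := by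
    unfold linStat
    rw [integral_sub hkz hkw, Finset.sum_sub_distrib]
    ring
  have hd2 : ‖linStat μ Λ z - linStat μ Λ w‖
      ≤ δ / η * (‖linStat μ Λ w‖ + 2 * (n * (M * Real.pi))) := by
    rw [hd]
    have h1 : ‖∑ i, (1 / (z - Λ i) - 1 / (w - Λ i))‖ ≤ δ / η * ∑ i, h (Λ i) := by
      rw [Finset.mul_sum]
      exact norm_sum_le_of_le _ fun i _ => hdiff (Λ i)
    have h2 : ‖(n : ℂ) * ∫ x : ℝ, (1 / (z - x) - 1 / (w - x)) ∂μ‖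
        ≤ δ / η * (n * ∫ x, h x ∂μ) := by
      rw [norm_mul, Complex.norm_natCast]
      have := mul_le_mul_of_nonneg_left hint (Nat.cast_nonneg (α := ℝ) n)
      linarith
    have h3 : (n : ℝ) * ∫ x, h x ∂μ ≤ n * (M * Real.pi) :=
      mul_le_mul_of_nonneg_left hP (Nat.cast_nonneg n)
    calc _ ≤ δ / η * ∑ i, h (Λ i) + δ / η * (n * ∫ x, h x ∂μ) :=
          (norm_sub_le _ _).trans (add_le_add h1 h2)
      _ = δ / η * (∑ i, h (Λ i) + n * ∫ x, h x ∂μ) := by ring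
      _ ≤ _ := by
          apply mul_le_mul_of_nonneg_left _ (by positivity)
          linarith
  have h4 : ‖linStat μ Λ z‖ ≤ ‖linStat μ Λ w‖ + ‖linStat μ Λ z - linStat μ Λ w‖ := by
    simpa using norm_add_le (linStat μ Λ w) (linStat μ Λ z - linStat μ Λ w)
  calc η * ‖linStat μ Λ z‖
      ≤ η * (‖linStat μ Λ w‖ + δ / η * (‖linStat μ Λ w‖ + 2 * (n * (M * Real.pi)))) :=
        mul_le_mul_of_nonneg_left (h4.trans (by linarith)) hz.le
    _ = _ := by field_simp; ring

/-- The first absolute moment of the linear statistic, at every height. -/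
lemma BoundedOnCut.exists_first_moment_le (hμ : BoundedOnCut μ M) (hβ : 0 < β) (hVc : Continuous V)
    {ε : ℝ} (hε : 0 < ε) (hV : ∀ x ∈ Set.Icc (-2 : ℝ) 2, 2 * logPot μ x - V x = c)
    (hVle : ∀ x ∈ Set.Icc (-2 - ε) (2 + ε), 2 * logPot μ x - V x ≤ c) :
    ∃ C > 0, ∀ n : ℕ, 2 ≤ n → ∀ z : ℂ, z.im ≠ 0 →
      |z.im| * ∫ Λ in Set.univ.pi (fun _ : Fin n => Set.Icc (-2 - ε) (2 + ε)),
        ‖linStat μ Λ z‖ * betaWeight β V n Λ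
        ≤ C * Real.sqrt (n * Real.log n) * resZ β V (-2 - ε) (2 + ε) n := by
  obtain ⟨C, hC, hmom⟩ := hμ.exists_second_moment_le hβ hVc hε hV hVle
  have hπ := Real.pi_pos
  have hM := hμ.pos
  refine ⟨1 + C + 2 * (M * Real.pi), by positivity, fun n hn => ?_⟩
  set Q := Set.univ.pi (fun _ : Fin n => Set.Icc (-2 - ε) (2 + ε)) with hQ
  set Z := resZ β V (-2 - ε) (2 + ε) n with hZ
  -- by conjugation symmetry it suffices to treat the upper half plane
  suffices hpos : ∀ z : ℂ, 0 < z.im → z.im * ∫ Λ in Q, ‖linStat μ Λ z‖ * betaWeight β V n Λ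
      ≤ (1 + C + 2 * (M * Real.pi)) * Real.sqrt (n * Real.log n) * Z by
    intro z hz
    rcases lt_or_gt_of_ne hz with h | h
    · have := hpos (starRingEnd ℂ z) (by simpa using h)
      simp_rw [norm_linStat_conj] at this
      rw [abs_of_neg h]
      simpa using this
    · rw [abs_of_pos h]; exact hpos z h
  intro z hz
  have hn2 : (2 : ℝ) ≤ n := by exact_mod_cast hn
  have hn0 : (0 : ℝ) < n := by linarith
  set δ := ((n : ℝ) ^ 2)⁻¹ with hδdef
  have hδ : 0 < δ := by positivity
  set w := z + δ * Complex.I with hw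
  have hwim : w.im = z.im + δ := by simp [hw]
  have hwδ : δ ≤ w.im := by rw [hwim]; linarith
  have hw0 : w.im ≠ 0 := by rw [hwim]; positivity
  set τ := Real.sqrt (n * Real.log n) with hτ
  have hlog : Real.log 2 ≤ Real.log n := Real.log_le_log (by norm_num) hn2
  have hl2 := Real.log_two_gt_d9
  have hnl : 1 ≤ n * Real.log n := by nlinarith
  have hτ1 : 1 ≤ τ := Real.one_le_sqrt.2 hnl
  have hτsq : τ ^ 2 = n * Real.log n := Real.sq_sqrt (by linarith)
  have hcomp : IsCompact Q := isCompact_univ_pi fun _ => isCompact_Icc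
  have hwc := continuous_betaWeight (n := n) hβ hVc
  have hlz := continuous_linStat (n := n) (μ := μ) hz.ne'
  have hlw := continuous_linStat (n := n) (μ := μ) hw0
  have hZ0 : 0 ≤ Z := integral_nonneg fun Λ => betaWeight_nonneg Λ
  have hi : ∀ f : (Fin n → ℝ) → ℝ, Continuous f → IntegrableOn f Q := fun f hf =>
    hf.continuousOn.integrableOn_compact hcomp
  have hpt : ∀ Λ ∈ Q, z.im * (‖linStat μ Λ z‖ * betaWeight β V n Λ)
      ≤ (τ + 2 * (M * Real.pi) * τ) * betaWeight β V n Λ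
        + τ⁻¹ * ((w.im * ‖linStat μ Λ w‖) ^ 2 * betaWeight β V n Λ) := by
    intro Λ _
    have h1 := hμ.linStat_le Λ hz hδ
    rw [← hw, ← hwim] at h1
    set A := w.im * ‖linStat μ Λ w‖ with hA
    have h2 : A ≤ τ + τ⁻¹ * A ^ 2 := by
      have : τ * A ≤ τ * (τ + τ⁻¹ * A ^ 2) := by
        rw [mul_add, mul_inv_cancel_left₀ (by positivity)]
        nlinarith [sq_nonneg (τ - A), sq_nonneg τ, sq_nonneg A]
      exact le_of_mul_le_mul_left this (by positivity)
    have h3 : 2 * δ * (n * (M * Real.pi)) ≤ 2 * (M * Real.pi) * τ := by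
      have : δ * n ≤ 1 := by
        rw [hδdef, inv_mul_le_iff₀ (by positivity)]; nlinarith
      have h4 : δ * n ≤ τ := this.trans hτ1
      have := mul_le_mul_of_nonneg_left h4 (by positivity : 0 ≤ 2 * (M * Real.pi))
      linarith
    have h5 : z.im * ‖linStat μ Λ z‖ ≤ (τ + 2 * (M * Real.pi) * τ) + τ⁻¹ * A ^ 2 := by linarith
    have := mul_le_mul_of_nonneg_right h5 (betaWeight_nonneg (β := β) (V := V) Λ)
    linarith
  have hi1 : IntegrableOn (fun Λ => (τ + 2 * (M * Real.pi) * τ) * betaWeight β V n Λ) Q :=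
    hi _ (by fun_prop)
  have hi2 : IntegrableOn
      (fun Λ => τ⁻¹ * ((w.im * ‖linStat μ Λ w‖) ^ 2 * betaWeight β V n Λ)) Q :=
    hi _ (by fun_prop)
  have hm := hmom n hn w hwδ
  calc _ = ∫ Λ in Q, z.im * (‖linStat μ Λ z‖ * betaWeight β V n Λ) := by
        rw [integral_const_mul]
    _ ≤ ∫ Λ in Q, ((τ + 2 * (M * Real.pi) * τ) * betaWeight β V n Λ
        + τ⁻¹ * ((w.im * ‖linStat μ Λ w‖) ^ 2 * betaWeight β V n Λ)) :=
        setIntegral_mono_on (hi _ (by fun_prop)) (hi1.add hi2) hcomp.measurableSet hpt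
    _ = (τ + 2 * (M * Real.pi) * τ) * Z
        + τ⁻¹ * ∫ Λ in Q, (w.im * ‖linStat μ Λ w‖) ^ 2 * betaWeight β V n Λ := by
        rw [integral_add hi1 hi2, integral_const_mul, integral_const_mul]
        rfl
    _ ≤ (τ + 2 * (M * Real.pi) * τ) * Z + τ⁻¹ * (C * τ ^ 2 * Z) := by
        rw [hτsq]
        gcongr
    _ = _ := by
        have : τ ≠ 0 := by positivity
        field_simp
        ring

end Deviation

/-! ### The first marginal -/

section Marginal

variable {β : ℝ} {V : ℝ → ℝ}

lemma integral_resP1 (hβ : 0 < β) (hVc : Continuous V) (a b : ℝ) (k : ℕ) {z : ℂ}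
    (hz : z.im ≠ 0) :
    ∫ l in Set.Icc a b, ((resP1 β V a b k l : ℝ) : ℂ) / (z - l)
      = ((resZ β V a b (k + 2))⁻¹ : ℝ) *
        ∫ Λ in Set.univ.pi (fun _ : Fin (k + 2) => Set.Icc a b),
          (betaWeight β V (k + 2) Λ : ℂ) * (1 / (z - Λ 0)) := by
  have hmp := (volume_preserving_piFinSuccAbove (fun _ : Fin (k + 2) => ℝ) 0).symm
  set e := (MeasurableEquiv.piFinSuccAbove (fun _ : Fin (k + 2) => ℝ) 0).symm with he
  have hee : ∀ p : ℝ × (Fin (k + 1) → ℝ), e p = Fin.cons p.1 p.2 := by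
    intro p
    rw [← Fin.insertNth_zero']
    rfl
  set F : (Fin (k + 2) → ℝ) → ℂ := fun Λ => (betaWeight β V (k + 2) Λ : ℂ) * (1 / (z - Λ 0)) with hF
  have hFc : Continuous F := by
    refine Continuous.mul (Complex.continuous_ofReal.comp (continuous_betaWeight hβ hVc)) ?_
    exact (continuous_stieltjes_kernel hz).comp (continuous_apply 0)
  have hpre : e ⁻¹' (Set.univ.pi fun _ : Fin (k + 2) => Set.Icc a b)
      = Set.Icc a b ×ˢ (Set.univ.pi fun _ : Fin (k + 1) => Set.Icc a b) := by
    ext p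
    rw [Set.mem_preimage, hee]
    simp only [Set.mem_univ_pi, Fin.forall_fin_succ, Fin.cons_zero, Fin.cons_succ, Set.mem_prod]
  have hec : Continuous fun p : ℝ × (Fin (k + 1) → ℝ) =>
      (Fin.cons p.1 p.2 : Fin (k + 2) → ℝ) := by
    refine continuous_pi fun i => ?_
    refine Fin.cases ?_ (fun j => ?_) i
    · simpa using continuous_fst
    · simp only [Fin.cons_succ]
      fun_prop
  have h1 := hmp.setIntegral_preimage_emb e.measurableEmbedding F
    (Set.univ.pi fun _ : Fin (k + 2) => Set.Icc a b)
  rw [← h1, hpre]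
  simp_rw [hee]
  have hint : IntegrableOn (fun p : ℝ × (Fin (k + 1) → ℝ) => F (Fin.cons p.1 p.2))
      (Set.Icc a b ×ˢ (Set.univ.pi fun _ : Fin (k + 1) => Set.Icc a b)) :=
    (hFc.comp hec).continuousOn.integrableOn_compact
      (isCompact_Icc.prod (isCompact_univ_pi fun _ => isCompact_Icc))
  rw [Measure.volume_eq_prod] at hint ⊢
  rw [setIntegral_prod _ hint, ← integral_const_mul]
  refine integral_congr_ae (Filter.Eventually.of_forall fun l => ?_)
  simp only [hF, resP1, Fin.cons_zero]
  rw [integral_mul_const, integral_complex_ofReal]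
  push_cast
  ring

/-- Exchangeability: every coordinate has the same law. -/
lemma integral_coord_eq (a b : ℝ) (n : ℕ) (f : ℝ → ℂ) (i j : Fin n) :
    ∫ Λ in Set.univ.pi (fun _ : Fin n => Set.Icc a b), (betaWeight β V n Λ : ℂ) * f (Λ i)
      = ∫ Λ in Set.univ.pi (fun _ : Fin n => Set.Icc a b), (betaWeight β V n Λ : ℂ) * f (Λ j) := by
  have hmp := volume_measurePreserving_piCongrLeft (fun _ : Fin n => ℝ) (Equiv.swap i j)
  set e := MeasurableEquiv.piCongrLeft (fun _ : Fin n => ℝ) (Equiv.swap i j) with he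
  have hee : ∀ Λ : Fin n → ℝ, e Λ = fun l => Λ (Equiv.swap i j l) := by
    intro Λ
    funext l
    have := Equiv.piCongrLeft_apply_apply (fun _ : Fin n => ℝ) (Equiv.swap i j) Λ
      (Equiv.swap i j l)
    rw [Equiv.swap_apply_self] at this
    exact this
  have hpre : e ⁻¹' (Set.univ.pi fun _ : Fin n => Set.Icc a b)
      = Set.univ.pi fun _ : Fin n => Set.Icc a b := by
    ext Λ
    rw [Set.mem_preimage, hee]
    simp only [Set.mem_univ_pi]
    exact (Equiv.swap i j).forall_congr_right (q := fun l => Λ l ∈ Set.Icc a b)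
  have h1 := hmp.setIntegral_preimage_emb e.measurableEmbedding
    (fun Λ => (betaWeight β V n Λ : ℂ) * f (Λ i)) (Set.univ.pi fun _ : Fin n => Set.Icc a b)
  rw [← h1, hpre]
  simp_rw [hee, betaWeight_comp_perm, Equiv.swap_apply_left]

/-- The error in the Stieltjes transform is the normalised mean of the linear statistic. -/
lemma integral_resP1_sub (hβ : 0 < β) (hVc : Continuous V) (a b : ℝ) (k : ℕ) {z : ℂ}
    (hz : z.im ≠ 0) (hZ : resZ β V a b (k + 2) ≠ 0) (μ : Measure ℝ) :
    (∫ l in Set.Icc a b, ((resP1 β V a b k l : ℝ) : ℂ) / (z - l)) - ∫ x : ℝ, 1 / (z - x) ∂μ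
      = ((resZ β V a b (k + 2))⁻¹ : ℝ) * (((k + 2 : ℕ) : ℂ)⁻¹ *
        ∫ Λ in Set.univ.pi (fun _ : Fin (k + 2) => Set.Icc a b),
          (betaWeight β V (k + 2) Λ : ℂ) * linStat μ Λ z) := by
  set Q := Set.univ.pi (fun _ : Fin (k + 2) => Set.Icc a b) with hQ
  have hcomp : IsCompact Q := isCompact_univ_pi fun _ => isCompact_Icc
  have hwc : Continuous fun Λ : Fin (k + 2) → ℝ => (betaWeight β V (k + 2) Λ : ℂ) :=
    Complex.continuous_ofReal.comp (continuous_betaWeight hβ hVc)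
  set G := ∫ x : ℝ, 1 / (z - x) ∂μ with hG
  have hi : ∀ i : Fin (k + 2), IntegrableOn
      (fun Λ : Fin (k + 2) → ℝ => (betaWeight β V (k + 2) Λ : ℂ) * (1 / (z - Λ i))) Q := fun i =>
    (hwc.mul ((continuous_stieltjes_kernel hz).comp
      (continuous_apply i))).continuousOn.integrableOn_compact hcomp
  have hi2 : IntegrableOn (fun Λ : Fin (k + 2) → ℝ =>
      (betaWeight β V (k + 2) Λ : ℂ) * (((k + 2 : ℕ) : ℂ) * G)) Q :=
    (hwc.mul continuous_const).continuousOn.integrableOn_compact hcomp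
  have h1 : ∫ Λ in Q, (betaWeight β V (k + 2) Λ : ℂ) * linStat μ Λ z
      = ((k + 2 : ℕ) : ℂ) * (∫ Λ in Q, (betaWeight β V (k + 2) Λ : ℂ) * (1 / (z - Λ 0)))
        - (resZ β V a b (k + 2) : ℂ) * (((k + 2 : ℕ) : ℂ) * G) := by
    unfold linStat
    simp_rw [mul_sub, Finset.mul_sum]
    rw [integral_sub (integrable_finsetSum _ fun i _ => hi i) hi2,
      integral_finsetSum _ fun i _ => hi i, integral_mul_const, integral_complex_ofReal]
    rw [Finset.sum_congr rfl fun i _ =>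
      integral_coord_eq a b (k + 2) (fun x : ℝ => 1 / (z - x)) i 0]
    simp [resZ, hQ]
  rw [h1, integral_resP1 hβ hVc a b k hz]
  have hZ' : (resZ β V a b (k + 2) : ℂ) ≠ 0 := by exact_mod_cast hZ
  have hk : ((k + 2 : ℕ) : ℂ) ≠ 0 := by exact_mod_cast (by omega : k + 2 ≠ 0)
  rw [← hQ]
  set S := ∫ Λ in Q, (betaWeight β V (k + 2) Λ : ℂ) * (1 / (z - Λ 0))
  rw [Complex.ofReal_inv]
  field_simp

end Marginal

/-! ### The equilibrium measure and the conclusion -/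

section Reduction

lemma betaWeight_congr {β : ℝ} {V W : ℝ → ℝ} {a b : ℝ} (h : ∀ x ∈ Set.Icc a b, V x = W x) {n : ℕ}
    {Λ : Fin n → ℝ} (hΛ : Λ ∈ Set.univ.pi fun _ : Fin n => Set.Icc a b) :
    betaWeight β V n Λ = betaWeight β W n Λ := by
  unfold betaWeight
  congr 1
  exact Finset.prod_congr rfl fun i _ => by rw [h _ (hΛ i (Set.mem_univ i))]

lemma measurableSet_cube (n : ℕ) (a b : ℝ) :
    MeasurableSet (Set.univ.pi fun _ : Fin n => Set.Icc a b) :=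
  MeasurableSet.univ_pi fun _ => measurableSet_Icc

lemma resZ_congr {β : ℝ} {V W : ℝ → ℝ} {a b : ℝ} (h : ∀ x ∈ Set.Icc a b, V x = W x) (n : ℕ) :
    resZ β V a b n = resZ β W a b n :=
  setIntegral_congr_fun (measurableSet_cube n a b) fun _ hΛ => betaWeight_congr h hΛ

lemma resP1_congr {β : ℝ} {V W : ℝ → ℝ} {a b : ℝ} (h : ∀ x ∈ Set.Icc a b, V x = W x) (k : ℕ)
    {l : ℝ} (hl : l ∈ Set.Icc a b) : resP1 β V a b k l = resP1 β W a b k l := by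
  unfold resP1
  rw [resZ_congr h]
  congr 1
  refine setIntegral_congr_fun (measurableSet_cube _ a b) fun y hy => betaWeight_congr h ?_
  intro i _
  refine Fin.cases ?_ (fun j => ?_) i
  · simpa using hl
  · simpa using hy j (Set.mem_univ j)

variable {V : ℝ → ℝ} {D : Set ℂ} {ρ : ℝ → ℝ} {P : ℂ → ℂ}

lemma EquilC13.integrable (hC : EquilC13 V D ρ P) : Integrable ρ := by
  by_contra h
  have := hC.ρ_int
  rw [integral_undef h] at this
  exact zero_ne_one this

/-- The equilibrium measure `ρ(x) dx`. -/
noncomputable def eqMeasure (ρ : ℝ → ℝ) : Measure ℝ :=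
  volume.withDensity fun x => ENNReal.ofReal (ρ x)

lemma EquilC13.isProbabilityMeasure (hC : EquilC13 V D ρ P) :
    IsProbabilityMeasure (eqMeasure ρ) := by
  constructor
  unfold eqMeasure
  rw [withDensity_apply _ MeasurableSet.univ, Measure.restrict_univ,
    ← ofReal_integral_eq_lintegral_ofReal hC.integrable
      (Filter.Eventually.of_forall hC.ρ_nonneg), hC.ρ_int, ENNReal.ofReal_one]

lemma EquilC13.exists_boundedOnCut (hC : EquilC13 V D ρ P) :
    ∃ M, BoundedOnCut (eqMeasure ρ) M := by
  have hPc : ContinuousOn (fun x : ℝ => P x) (Set.Icc (-2 : ℝ) 2) :=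
    hC.P_anal.continuousOn.comp Complex.continuous_ofReal.continuousOn fun x hx => hC.D_supset x hx
  have hρc : ContinuousOn (fun x : ℝ => (1 / (2 * Real.pi)) * (P x).re * Real.sqrt (4 - x ^ 2))
      (Set.Icc (-2 : ℝ) 2) := by
    refine ContinuousOn.mul (continuousOn_const.mul (Complex.continuous_re.comp_continuousOn hPc)) ?_
    exact Continuous.continuousOn (by fun_prop)
  obtain ⟨C, hCb⟩ := isCompact_Icc.exists_bound_of_continuousOn hρc
  refine ⟨|C| + 1, by positivity, ?_⟩
  have hle : (fun x => ENNReal.ofReal (ρ x))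
      ≤ (Set.Icc (-2 : ℝ) 2).indicator fun _ => ENNReal.ofReal (|C| + 1) := by
    intro x
    by_cases hx : x ∈ Set.Icc (-2 : ℝ) 2
    · rw [Set.indicator_of_mem hx]
      apply ENNReal.ofReal_le_ofReal
      have := (le_abs_self _).trans (hCb x hx)
      rw [← hC.ρ_eq x hx] at this
      linarith [le_abs_self C]
    · simp [Set.indicator_of_notMem hx, hC.ρ_supp x hx]
  calc eqMeasure ρ ≤ volume.withDensity _ := withDensity_mono (Filter.Eventually.of_forall hle)
    _ = _ := by rw [withDensity_indicator measurableSet_Icc, withDensity_const]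

lemma EquilC13.integral_eqMeasure (hC : EquilC13 V D ρ P) {E : Type*} [NormedAddCommGroup E]
    [NormedSpace ℝ E] (f : ℝ → E) : ∫ x, f x ∂(eqMeasure ρ) = ∫ x, ρ x • f x := by
  unfold eqMeasure
  rw [integral_withDensity_eq_integral_toReal_smul₀
    hC.integrable.aestronglyMeasurable.aemeasurable.ennreal_ofReal
    (Filter.Eventually.of_forall fun _ => ENNReal.ofReal_lt_top)]
  simp_rw [ENNReal.toReal_ofReal (hC.ρ_nonneg _)]

lemma EquilC13.logPot_eq (hC : EquilC13 V D ρ P) (x : ℝ) :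
    logPot (eqMeasure ρ) x = ∫ y, Real.log |x - y| * ρ y := by
  unfold logPot
  rw [hC.integral_eqMeasure]
  simp_rw [smul_eq_mul, mul_comm]

lemma EquilC13.stieltjes_eq (hC : EquilC13 V D ρ P) (z : ℂ) :
    ∫ x : ℝ, 1 / (z - x) ∂(eqMeasure ρ) = ∫ l in (-2:ℝ)..2, (ρ l : ℂ) / (z - l) := by
  rw [hC.integral_eqMeasure, intervalIntegral.integral_of_le (by norm_num),
    ← integral_Icc_eq_integral_Ioc, ← integral_indicator measurableSet_Icc]
  refine integral_congr_ae (Filter.Eventually.of_forall fun x => ?_)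
  by_cases hx : x ∈ Set.Icc (-2 : ℝ) 2
  · simp only [Set.indicator_of_mem hx, Complex.real_smul, mul_one_div]
  · simp only [Set.indicator_of_notMem hx, hC.ρ_supp x hx, zero_smul]

end Reduction

/-- the Stieltjes transform of the first marginal density converges to that
of the equilibrium density at rate `√(log n / n) / |Im z|`. -/
theorem stieltjes_transform_marginal_convergence
    (β : ℝ) (hβ : 0 < β) (V : ℝ → ℝ)
    (D : Set ℂ) (ρ : ℝ → ℝ) (P : ℂ → ℂ) (hC : EquilC13 V D ρ P)
    (ε : ℝ) (hε : 0 < ε)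
    (hI : ∀ x : ℝ, x ∈ Set.Icc (-2 - ε) (2 + ε) → (x : ℂ) ∈ D) :
    ∃ C > 0, ∀ k : ℕ, ∀ z : ℂ, z.im ≠ 0 →
      ‖(∫ l in Set.Icc (-2 - ε) (2 + ε),
            ((resP1 β V (-2 - ε) (2 + ε) k l : ℝ) : ℂ) / (z - l))
          - ∫ l in (-2:ℝ)..2, (ρ l : ℂ) / (z - l)‖
        ≤ C * (Real.sqrt (Real.log (k + 2 : ℝ)) / Real.sqrt (k + 2 : ℝ)) / |z.im| := by
  have hab : -2 - ε ≤ 2 + ε := by linarith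
  -- a potential that is continuous on the whole line and agrees with `V` on the interval
  set W : ℝ → ℝ := Set.IccExtend hab fun x => V x with hW
  have hVW : ∀ x ∈ Set.Icc (-2 - ε) (2 + ε), V x = W x := fun x hx =>
    (Set.IccExtend_of_mem hab (fun x => V x) hx).symm
  have hVcont : ContinuousOn V (Set.Icc (-2 - ε) (2 + ε)) := by
    obtain ⟨Vc, hd, he⟩ := hC.V_anal
    have h1 : ContinuousOn (fun x : ℝ => (Vc x).re) (Set.Icc (-2 - ε) (2 + ε)) :=
      Complex.continuous_re.comp_continuousOn
        (hd.continuousOn.comp Complex.continuous_ofReal.continuousOn hI)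
    refine h1.congr fun x hx => ?_
    simp only [he x (hI x hx), Complex.ofReal_re]
  have hWc : Continuous W := (continuousOn_iff_continuous_domRestrict.1 hVcont).Icc_extend'
  have hsub : ∀ x ∈ Set.Icc (-2 : ℝ) 2, x ∈ Set.Icc (-2 - ε) (2 + ε) := fun x hx =>
    ⟨by linarith [hx.1], by linarith [hx.2]⟩
  set μ := eqMeasure ρ with hμdef
  have := hC.isProbabilityMeasure
  obtain ⟨M, hμ⟩ := hC.exists_boundedOnCut
  obtain ⟨c, hc1, hc2⟩ := hC.equil
  have hWeq : ∀ x ∈ Set.Icc (-2 : ℝ) 2, 2 * logPot μ x - W x = c := fun x hx => by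
    rw [← hVW x (hsub x hx), hC.logPot_eq]; exact hc1 x hx
  have hWle : ∀ x ∈ Set.Icc (-2 - ε) (2 + ε), 2 * logPot μ x - W x ≤ c := fun x hx => by
    by_cases h : x ∈ Set.Icc (-2 : ℝ) 2
    · exact (hWeq x h).le
    · rw [← hVW x hx, hC.logPot_eq]; exact (hc2 x h).le
  obtain ⟨C, hC0, hmom⟩ := hμ.exists_first_moment_le hβ hWc hε hWeq hWle
  refine ⟨C, hC0, fun k z hz => ?_⟩
  set Z := resZ β W (-2 - ε) (2 + ε) (k + 2) with hZ
  have hZpos : 0 < Z := by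
    have h := (Real.exp_pos _).trans_le (hμ.resZ_ge (n := k + 2) hβ hWc hWeq
      (a := -2 - ε) (b := 2 + ε) (by linarith) (by linarith))
    exact (pos_iff_pos_of_mul_pos h).1 (pow_pos hμ.pos _)
  have e1 : ∫ l in Set.Icc (-2 - ε) (2 + ε),
        ((resP1 β V (-2 - ε) (2 + ε) k l : ℝ) : ℂ) / (z - l)
      = ∫ l in Set.Icc (-2 - ε) (2 + ε),
        ((resP1 β W (-2 - ε) (2 + ε) k l : ℝ) : ℂ) / (z - l) :=
    setIntegral_congr_fun measurableSet_Icc fun l hl => by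
      simp only [resP1_congr hVW k hl]
  rw [e1, ← hC.stieltjes_eq, integral_resP1_sub hβ hWc _ _ k hz hZpos.ne' (eqMeasure ρ),
    ← hZ, ← hμdef, norm_mul, norm_mul, norm_inv, Complex.norm_natCast, Complex.norm_real,
    Real.norm_of_nonneg (inv_nonneg.2 hZpos.le)]
  set Q := Set.univ.pi (fun _ : Fin (k + 2) => Set.Icc (-2 - ε) (2 + ε)) with hQ
  have hnorm : ‖∫ Λ in Q, (betaWeight β W (k + 2) Λ : ℂ) * linStat μ Λ z‖
      ≤ ∫ Λ in Q, ‖linStat μ Λ z‖ * betaWeight β W (k + 2) Λ := by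
    refine (norm_integral_le_integral_norm _).trans (le_of_eq ?_)
    refine integral_congr_ae (Filter.Eventually.of_forall fun Λ => ?_)
    simp only [norm_mul, Complex.norm_real, Real.norm_of_nonneg (betaWeight_nonneg Λ)]
    ring
  have hm := hmom (k + 2) (by omega) z hz
  rw [← hQ, ← hZ] at hm
  have hη : 0 < |z.im| := abs_pos.2 hz
  set S := ∫ Λ in Q, ‖linStat μ Λ z‖ * betaWeight β W (k + 2) Λ with hS
  have hk : (0 : ℝ) < ((k + 2 : ℕ) : ℝ) := by positivity
  have hS2 : S ≤ C * Real.sqrt (((k + 2 : ℕ) : ℝ) * Real.log ((k + 2 : ℕ) : ℝ)) * Z / |z.im| := by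
    rw [le_div_iff₀ hη, mul_comm]; exact hm
  calc _ ≤ Z⁻¹ * (((k + 2 : ℕ) : ℝ)⁻¹ *
        (C * Real.sqrt (((k + 2 : ℕ) : ℝ) * Real.log ((k + 2 : ℕ) : ℝ)) * Z / |z.im|)) := by
        gcongr
        exact hnorm.trans hS2
    _ = C * (Real.sqrt (Real.log (k + 2 : ℝ)) / Real.sqrt (k + 2 : ℝ)) / |z.im| := by
        have ek : ((k + 2 : ℕ) : ℝ) = (k : ℝ) + 2 := by push_cast; ring
        rw [ek] at hk ⊢
        rw [Real.sqrt_mul hk.le]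
        have hs : Real.sqrt ((k : ℝ) + 2) ≠ 0 := (Real.sqrt_pos.2 hk).ne'
        have hsq : Real.sqrt ((k : ℝ) + 2) ^ 2 = (k : ℝ) + 2 := Real.sq_sqrt hk.le
        field_simp
        rw [hsq]
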